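/- arXiv:math/0512053 — 4 statements merged into one kernel-verified Lean document; each statement's English description precedes it below -/
import Mathlib

section
/- For every λ > 0 there exists a function g : ℝ → ℝ which is real-analytic, odd, 2π-periodic with minimal period 2π, not identically zero, and satisfies g''(t) − ⟨g²⟩ g(t) + λ g(t)³ = 0 for all t ∈ ℝ; moreover g is non-degenerate in the space of odd 2π-periodic functions: every C², odd, 2π-periodic function h : ℝ → ℝ satisfying h''(t) − (⟨g²⟩ − 3λ g(t)²) h(t) = 2⟨g h⟩ g(t) for all t is identically zero. -/
open Real

/-- Average of a function over one period `[0, 2π]`. -/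
noncomputable def avg (f : ℝ → ℝ) : ℝ := (1 / (2 * π)) * ∫ t in (0:ℝ)..(2 * π), f t

/-!
Let `ψ` be the elliptic amplitude function of complementary modulus `r`, run at the speed at which
it winds once per period. The elliptic sine wave `g = A sin ψ` with the right amplitude `A` solves a
Duffing equation `g'' = a g - λ g³`, and the constraint `a = ⟨g²⟩` becomes one equation between the
complete elliptic integrals `K` and `E`. It has a root by the intermediate value theorem, because
`K → ∞` as `r → 0`.

For non-degeneracy, the linearised operator has an explicit response `u` to the forcing `g`. Green's
identity against `u` shows that `⟨g h⟩ = 0`, unless `λ (4 g'(0)² + a²) = 2 g'(0)²`, which the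
inequality `r K ≤ E` excludes. Green's identity against the dilation mode `g + t g'` then gives
`h' = 0` at the end of the period, hence `h = 0`.
-/

open scoped ContDiff Topology

section Average

variable {F G : ℝ → ℝ}

theorem integral_eq_two_pi_mul_avg (F : ℝ → ℝ) :
    ∫ t in (0 : ℝ)..(2 * π), F t = 2 * π * avg F := by
  rw [avg]
  field_simp

theorem avg_eq_iff {m : ℝ} : avg F = m ↔ ∫ t in (0 : ℝ)..(2 * π), F t = 2 * π * m := by
  rw [integral_eq_two_pi_mul_avg, mul_right_inj' two_pi_pos.ne']

theorem avg_mono (hF : Continuous F) (hG : Continuous G) (h : ∀ t, F t ≤ G t) :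
    avg F ≤ avg G :=
  mul_le_mul_of_nonneg_left (intervalIntegral.integral_mono two_pi_pos.le
    (hF.intervalIntegrable _ _) (hG.intervalIntegrable _ _) h) (by positivity)

theorem avg_const_mul (c : ℝ) (F : ℝ → ℝ) : avg (fun t => c * F t) = c * avg F := by
  rw [avg, avg, intervalIntegral.integral_const_mul]
  ring

theorem avg_const_add (c : ℝ) (hF : Continuous F) : avg (fun t => c + F t) = c + avg F := by
  rw [avg_eq_iff, intervalIntegral.integral_add (by simp) (hF.intervalIntegrable _ _),
    integral_eq_two_pi_mul_avg F, intervalIntegral.integral_const, smul_eq_mul]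
  ring

theorem avg_sin_sq : avg (fun t => sin t ^ 2) = 1 / 2 := by
  rw [avg_eq_iff, integral_sin_sq, sin_two_pi, sin_zero]
  ring

end Average

section AnalyticPrimitive

variable {𝕜 E : Type*} [RCLike 𝕜] [NormedAddCommGroup E] [NormedSpace 𝕜 E]

/-- The formal primitive of a power series in one variable, with constant term zero
(for `n = 0` the scalar is `0⁻¹ = 0`). -/
noncomputable def antiderivSeries (p : FormalMultilinearSeries 𝕜 𝕜 E) :
    FormalMultilinearSeries 𝕜 𝕜 E :=
  fun n => (n : 𝕜)⁻¹ • ContinuousMultilinearMap.mkPiRing 𝕜 (Fin n) (p.coeff (n - 1))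

theorem antiderivSeries_coeff_succ (p : FormalMultilinearSeries 𝕜 𝕜 E) (n : ℕ) :
    (antiderivSeries p).coeff (n + 1) = ((n : 𝕜) + 1)⁻¹ • p.coeff n := by
  change ((n + 1 : ℕ) : 𝕜)⁻¹ • (∏ _i : Fin (n + 1), (1 : 𝕜)) • p.coeff n = _
  simp

theorem norm_antiderivSeries_succ_le (p : FormalMultilinearSeries 𝕜 𝕜 E) (n : ℕ) :
    ‖antiderivSeries p (n + 1)‖ ≤ ‖p n‖ := by
  rw [FormalMultilinearSeries.norm_apply_eq_norm_coef, antiderivSeries_coeff_succ, norm_smul,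
    FormalMultilinearSeries.norm_apply_eq_norm_coef, norm_inv]
  refine mul_le_of_le_one_left (norm_nonneg _) (inv_le_one_of_one_le₀ ?_)
  rw [← Nat.cast_succ, RCLike.norm_natCast]
  exact_mod_cast n.succ_pos

theorem radius_le_radius_antiderivSeries (p : FormalMultilinearSeries 𝕜 𝕜 E) :
    p.radius ≤ (antiderivSeries p).radius := by
  refine ENNReal.le_of_forall_nnreal_lt fun r hr => ?_
  obtain ⟨C, hC, hbound⟩ := p.norm_mul_pow_le_of_lt_radius hr
  refine (antiderivSeries p).le_radius_of_bound (C * r) fun n => ?_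
  cases n with
  | zero => simpa [antiderivSeries] using by positivity
  | succ n =>
    calc ‖antiderivSeries p (n + 1)‖ * (r : ℝ) ^ (n + 1) ≤ ‖p n‖ * (r : ℝ) ^ (n + 1) := by
          gcongr; exact norm_antiderivSeries_succ_le p n
      _ = ‖p n‖ * (r : ℝ) ^ n * r := by ring
      _ ≤ C * r := by gcongr; exact hbound n

variable [CompleteSpace E]

theorem hasDerivAt_sum_antiderivSeries {p : FormalMultilinearSeries 𝕜 𝕜 E} {f : 𝕜 → E} {x : 𝕜}
    {r : ENNReal} (hf : HasFPowerSeriesOnBall f p x r) {y : 𝕜} (hy : y ∈ Metric.eball 0 r) :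
    HasDerivAt (antiderivSeries p).sum (f (x + y)) y := by
  have hr : r ≤ (antiderivSeries p).radius := hf.r_le.trans (radius_le_radius_antiderivSeries p)
  have hsum := ((antiderivSeries p).hasFPowerSeriesOnBall (hf.r_pos.trans_le hr)).mono hf.r_pos hr
  have hfderiv := (hsum.fderiv.hasSum hy).mapL (ContinuousLinearMap.apply 𝕜 E (1 : 𝕜))
  have hterm (n : ℕ) : ContinuousLinearMap.apply 𝕜 E (1 : 𝕜)
      ((antiderivSeries p).derivSeries n fun _ => y) = p n fun _ => y := by
    rw [FormalMultilinearSeries.apply_eq_pow_smul_coeff,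
      FormalMultilinearSeries.apply_eq_pow_smul_coeff, ContinuousLinearMap.apply_apply,
      smul_apply, FormalMultilinearSeries.derivSeries_coeff_one,
      antiderivSeries_coeff_succ, ← Nat.cast_smul_eq_nsmul 𝕜, Nat.cast_succ,
      smul_inv_smul₀ (Nat.cast_add_one_ne_zero n)]
  simp only [hterm, zero_add] at hfderiv
  have hdiff : DifferentiableAt 𝕜 (antiderivSeries p).sum y :=
    hsum.differentiableOn.differentiableAt (Metric.isOpen_eball.mem_nhds hy)
  exact hdiff.hasDerivAt.congr_deriv (hfderiv.unique (hf.hasSum hy))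

theorem analyticAt_of_eventually_hasDerivAt {F f : 𝕜 → E} {x : 𝕜} (hf : AnalyticAt 𝕜 f x)
    (hF : ∀ᶠ y in 𝓝 x, HasDerivAt F (f y) y) : AnalyticAt 𝕜 F x := by
  obtain ⟨p, r, hp⟩ := hf
  set G : 𝕜 → E := fun y => (antiderivSeries p).sum (y - x)
  have hG : ∀ᶠ y in 𝓝 x, HasDerivAt G (f y) y := by
    filter_upwards [Metric.eball_mem_nhds x hp.r_pos] with y hy
    have hyx : y - x ∈ Metric.eball 0 r := by
      simpa [Metric.mem_eball, edist_eq_enorm_sub] using hy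
    simpa using (hasDerivAt_sum_antiderivSeries hp hyx).comp_sub_const y x
  have hGx : AnalyticAt 𝕜 G x := by
    have hsum : AnalyticAt 𝕜 (antiderivSeries p).sum (x - x) := by
      rw [sub_self]
      exact ((antiderivSeries p).hasFPowerSeriesOnBall ((hp.r_pos.trans_le hp.r_le).trans_le
        (radius_le_radius_antiderivSeries p))).analyticAt
    exact hsum.fun_comp (g := (antiderivSeries p).sum) (f := fun y => y - x)
      (analyticAt_id.fun_sub analyticAt_const)
  obtain ⟨ε, hε, hball⟩ := Metric.eventually_nhds_iff_ball.1 (hF.and hG)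
  have hder : ∀ y ∈ Metric.ball x ε, HasDerivAt (F - G) 0 y := fun y hy => by
    simpa using (hball y hy).1.sub (hball y hy).2
  have hconst : ∀ y ∈ Metric.ball x ε, (F - G) y = (F - G) x := fun y hy =>
    Metric.isOpen_ball.is_const_of_deriv_eq_zero (convex_ball x ε).isPreconnected
      (fun z hz => (hder z hz).differentiableAt.differentiableWithinAt)
      (fun z hz => (hder z hz).deriv) hy (Metric.mem_ball_self hε)
  refine (hGx.add (analyticAt_const (v := (F - G) x))).congr ?_
  filter_upwards [Metric.ball_mem_nhds x hε] with y hy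
  rw [← hconst y hy]
  simp

end AnalyticPrimitive

section PeriodicPrimitive

variable {f : ℝ → ℝ}

theorem contDiff_omega_integral (hf : ContDiff ℝ ω f) (a : ℝ) :
    ContDiff ℝ ω fun x => ∫ s in a..x, f s :=
  contDiff_iff_contDiffAt.2 fun _ =>
    (analyticAt_of_eventually_hasDerivAt hf.contDiffAt.analyticAt (.of_forall fun t =>
      (hf.continuous.integral_hasStrictDerivAt a t).hasDerivAt)).contDiffAt

theorem strictMono_integral_of_pos (hf : Continuous f) (hpos : ∀ x, 0 < f x) (a : ℝ) :
    StrictMono fun x => ∫ s in a..x, f s :=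
  strictMono_of_deriv_pos fun x => by rw [hf.deriv_integral]; exact hpos x

theorem integral_zero_neg_of_even (hf : Function.Even f) (x : ℝ) :
    ∫ s in (0 : ℝ)..-x, f s = -∫ s in (0 : ℝ)..x, f s := by
  have hreflect := intervalIntegral.integral_comp_neg (a := 0) (b := x) f
  simp only [hf _, neg_zero] at hreflect
  rw [hreflect, intervalIntegral.integral_symm]

/-- The autonomous equation `ψ' = 1 / f ψ` is solved by inverting the primitive of `f`. -/
theorem exists_orderIso_hasDerivAt_inv {T : ℝ} (hf : ContDiff ℝ ω f) (hpos : ∀ x, 0 < f x)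
    (heven : Function.Even f) (hper : Function.Periodic f T) (hT : 0 < T) :
    ∃ ψ : ℝ ≃o ℝ, ContDiff ℝ ω ψ ∧ (∀ t, HasDerivAt ψ (f (ψ t))⁻¹ t) ∧ Function.Odd ψ ∧
      ∀ t, ψ (t + ∫ x in (0 : ℝ)..T, f x) = ψ t + T := by
  have hint : ∀ a b, IntervalIntegrable f MeasureTheory.volume a b :=
    hf.continuous.intervalIntegrable
  set V : ℝ → ℝ := fun x => ∫ s in (0 : ℝ)..x, f s
  have hderiv : ∀ x, HasDerivAt V (f x) x := fun x =>
    (hf.continuous.integral_hasStrictDerivAt 0 x).hasDerivAt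
  have hmono : StrictMono V := strictMono_integral_of_pos hf.continuous hpos 0
  have hsurj : Function.Surjective V :=
    (contDiff_omega_integral hf 0).continuous.surjective
      (hper.tendsto_atTop_intervalIntegral_of_pos' (hint _ _) hpos hT)
      (hper.tendsto_atBot_intervalIntegral_of_pos' (hint _ _) hpos hT)
  have hodd : ∀ x, V (-x) = -V x := integral_zero_neg_of_even heven
  have hwind : ∀ x, V (x + T) = V x + V T := fun x => by
    simpa using hper.intervalIntegral_add_eq_add 0 x hint
  let e : ℝ ≃o ℝ := hmono.orderIsoOfSurjective V hsurj
  have hV : ∀ t, V (e.symm t) = t := e.apply_symm_apply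
  refine ⟨e.symm, ?_, fun t => ?_, fun t => hmono.injective ?_, fun t => hmono.injective ?_⟩
  · exact e.toHomeomorph.contDiff_symm_deriv (fun x => (hpos x).ne') hderiv
      (contDiff_omega_integral hf 0)
  · exact (hderiv (e.symm t)).of_local_left_inverse e.symm.continuous.continuousAt (hpos _).ne'
      (.of_forall hV)
  · rw [hV, hodd, hV]
  · rw [hV, hwind, hV]

end PeriodicPrimitive

/-- `u` solves the forced Hill equation `u'' = q u + φ` on the line, with derivative `u'`. -/
structure IsHillSolution (q φ u u' : ℝ → ℝ) : Prop where
  hasDerivAt : ∀ t, HasDerivAt u (u' t) t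
  hasDerivAt_deriv : ∀ t, HasDerivAt u' (q t * u t + φ t) t

namespace IsHillSolution

variable {q φ χ u u' w w' : ℝ → ℝ}

theorem continuous (hu : IsHillSolution q φ u u') : Continuous u :=
  continuous_iff_continuousAt.2 fun t => (hu.hasDerivAt t).continuousAt

theorem of_contDiff (hu : ContDiff ℝ 2 u) (h : ∀ t, deriv (deriv u) t = q t * u t + φ t) :
    IsHillSolution q φ u (deriv u) where
  hasDerivAt t := (hu.differentiable two_ne_zero t).hasDerivAt
  hasDerivAt_deriv t := h t ▸ (hu.differentiable_deriv_two t).hasDerivAt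

theorem integral_green (hu : IsHillSolution q φ u u') (hw : IsHillSolution q χ w w')
    (hφ : Continuous φ) (hχ : Continuous χ) (x y : ℝ) :
    ∫ t in x..y, (φ t * w t - u t * χ t)
      = (u' y * w y - u y * w' y) - (u' x * w x - u x * w' x) := by
  have hu_cont := hu.continuous
  have hw_cont := hw.continuous
  rw [intervalIntegral.integral_eq_sub_of_hasDerivAt (f := fun t => u' t * w t - u t * w' t)]
  · intro t _
    refine (((hu.hasDerivAt_deriv t).fun_mul (hw.hasDerivAt t)).fun_sub
      ((hu.hasDerivAt t).fun_mul (hw.hasDerivAt_deriv t))).congr_deriv ?_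
    ring
  · exact Continuous.intervalIntegrable (by fun_prop) x y

theorem eq_zero_of_cauchyData (hq : Continuous q) (hu : IsHillSolution q 0 u u') {t₀ : ℝ}
    (h0 : u t₀ = 0) (h0' : u' t₀ = 0) : u = 0 := by
  funext t
  obtain ⟨R, ht₀, ht⟩ : ∃ R, t₀ ∈ Set.Ioo (-R) R ∧ t ∈ Set.Ioo (-R) R :=
    ⟨max |t₀| |t| + 1, abs_lt.1 (by grind), abs_lt.1 (by grind)⟩
  obtain ⟨C, hC⟩ := isCompact_Icc.exists_bound_of_continuousOn (s := Set.Icc (-R) R) hq.continuousOn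
  have hlip : ∀ s ∈ Set.Ioo (-R) R, LipschitzOnWith (max 1 C.toNNReal)
      (fun p : ℝ × ℝ => (p.2, q s * p.1)) Set.univ := fun s hs => by
    have hqs : ‖q s‖₊ ≤ C.toNNReal := NNReal.le_toNNReal_of_coe_le (hC s ⟨hs.1.le, hs.2.le⟩)
    refine (LipschitzWith.prodMk LipschitzWith.prod_snd
      (((lipschitzWith_smul (q s)).comp LipschitzWith.prod_fst).weaken ?_)).lipschitzOnWith
    simpa using hqs
  have huniq := ODE_solution_unique_of_mem_Ioo hlip ht₀
    (f := fun t => (u t, u' t)) (g := 0)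
    (fun s _ => ⟨by simpa using (hu.hasDerivAt s).prodMk (hu.hasDerivAt_deriv s), trivial⟩)
    (fun s _ => ⟨(hasDerivAt_const s 0).congr_deriv (by simp [← Prod.zero_eq_mk]), trivial⟩)
    (by simp [h0, h0'])
  exact congrArg Prod.fst (huniq ht)

end IsHillSolution

/-- `g` solves the Duffing equation `g'' = a g - lam g³` on the line, with velocity `v = g'`. -/
structure IsDuffingSolution (lam a : ℝ) (g v : ℝ → ℝ) : Prop where
  hasDerivAt : ∀ t, HasDerivAt g (v t) t
  hasDerivAt_velocity : ∀ t, HasDerivAt v (a * g t - lam * g t ^ 3) t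

/-- The primitive of `g² - a` vanishing at `0`. -/
noncomputable def squareDrift (a : ℝ) (g : ℝ → ℝ) (t : ℝ) : ℝ := ∫ s in (0 : ℝ)..t, (g s ^ 2 - a)

theorem hasDerivAt_squareDrift {g : ℝ → ℝ} (hg : Continuous g) (a t : ℝ) :
    HasDerivAt (squareDrift a g) (g t ^ 2 - a) t :=
  ((by fun_prop : Continuous fun s => g s ^ 2 - a).integral_hasStrictDerivAt 0 t).hasDerivAt

/-- The response `u` of the linearised Duffing operator `u'' - (a - 3 lam g²) u` to a forcing
proportional to `g`; `v` is the velocity of `g`. The quintic terms cancel between `g³` and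
`squareDrift * v`, and the multiple of `g` removes the cubic ones. -/
noncomputable def resonantMode (lam a : ℝ) (g v : ℝ → ℝ) (t : ℝ) : ℝ :=
  lam * (g t ^ 3 - squareDrift a g t * v t) + (lam - 2) * a * g t

namespace IsDuffingSolution

variable {lam a T : ℝ} {g v : ℝ → ℝ}

theorem continuous (hg : IsDuffingSolution lam a g v) : Continuous g :=
  continuous_iff_continuousAt.2 fun t => (hg.hasDerivAt t).continuousAt

theorem continuous_velocity (hg : IsDuffingSolution lam a g v) : Continuous v :=
  continuous_iff_continuousAt.2 fun t => (hg.hasDerivAt_velocity t).continuousAt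

theorem deriv_deriv (hg : IsDuffingSolution lam a g v) (t : ℝ) :
    deriv (deriv g) t = a * g t - lam * g t ^ 3 := by
  rw [funext fun s => (hg.hasDerivAt s).deriv, (hg.hasDerivAt_velocity t).deriv]

theorem energy_eq (hg : IsDuffingSolution lam a g v) (s t : ℝ) :
    v s ^ 2 - a * g s ^ 2 + lam / 2 * g s ^ 4 = v t ^ 2 - a * g t ^ 2 + lam / 2 * g t ^ 4 := by
  have hderiv : ∀ x, HasDerivAt (fun x => v x ^ 2 - a * g x ^ 2 + lam / 2 * g x ^ 4) 0 x := by
    intro x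
    refine ((((hg.hasDerivAt_velocity x).fun_pow 2).fun_sub
      (((hg.hasDerivAt x).fun_pow 2).const_mul a)).fun_add
        (((hg.hasDerivAt x).fun_pow 4).const_mul (lam / 2))).congr_deriv ?_
    push_cast
    ring
  exact is_const_of_deriv_eq_zero (fun x => (hderiv x).differentiableAt)
    (fun x => (hderiv x).deriv) s t

theorem velocity_sq_eq (hg : IsDuffingSolution lam a g v) (h0 : g 0 = 0) (t : ℝ) :
    v t ^ 2 = v 0 ^ 2 + a * g t ^ 2 - lam / 2 * g t ^ 4 := by
  have henergy := hg.energy_eq t 0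
  rw [h0] at henergy
  linear_combination henergy

theorem integral_pow_four (hg : IsDuffingSolution lam a g v) (h0 : g 0 = 0) (hT : g T = 0) :
    3 / 2 * lam * ∫ t in (0 : ℝ)..T, g t ^ 4
      = T * v 0 ^ 2 + 2 * a * ∫ t in (0 : ℝ)..T, g t ^ 2 := by
  have hg_cont := hg.continuous
  have hint {F : ℝ → ℝ} (hF : Continuous F) : IntervalIntegrable F MeasureTheory.volume 0 T :=
    hF.intervalIntegrable 0 T
  have hvirial : ∫ t in (0 : ℝ)..T,
      (v 0 ^ 2 + 2 * a * g t ^ 2 - 3 / 2 * lam * g t ^ 4) = 0 := by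
    rw [intervalIntegral.integral_eq_sub_of_hasDerivAt (f := fun t => g t * v t)]
    · simp [h0, hT]
    · intro t _
      refine ((hg.hasDerivAt t).fun_mul (hg.hasDerivAt_velocity t)).congr_deriv ?_
      linear_combination hg.velocity_sq_eq h0 t
    · exact hint (by fun_prop)
  rw [intervalIntegral.integral_sub (hint (by fun_prop)) (hint (by fun_prop)),
    intervalIntegral.integral_add (hint (by fun_prop)) (hint (by fun_prop)),
    intervalIntegral.integral_const_mul, intervalIntegral.integral_const_mul,
    intervalIntegral.integral_const, smul_eq_mul] at hvirial
  linear_combination -hvirial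

theorem integral_squareDrift_mul (hg : IsDuffingSolution lam a g v) (h0 : g 0 = 0) (hT : g T = 0) :
    2 * ∫ t in (0 : ℝ)..T, squareDrift a g t * g t * v t
      = a * (∫ t in (0 : ℝ)..T, g t ^ 2) - ∫ t in (0 : ℝ)..T, g t ^ 4 := by
  have hg_cont := hg.continuous
  have hv_cont := hg.continuous_velocity
  have hY := hasDerivAt_squareDrift hg_cont a
  have hY_cont := continuous_iff_continuousAt.2 fun t => (hY t).continuousAt
  have hint {F : ℝ → ℝ} (hF : Continuous F) : IntervalIntegrable F MeasureTheory.volume 0 T :=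
    hF.intervalIntegrable 0 T
  have hparts : ∫ t in (0 : ℝ)..T,
      (2 * (squareDrift a g t * g t * v t) + g t ^ 4 - a * g t ^ 2) = 0 := by
    rw [intervalIntegral.integral_eq_sub_of_hasDerivAt (f := fun t => squareDrift a g t * g t ^ 2)]
    · simp [h0, hT]
    · intro t _
      refine ((hY t).fun_mul ((hg.hasDerivAt t).fun_pow 2)).congr_deriv ?_
      push_cast
      ring
    · exact hint (by fun_prop)
  rw [intervalIntegral.integral_sub (hint (by fun_prop)) (hint (by fun_prop)),
    intervalIntegral.integral_add (hint (by fun_prop)) (hint (by fun_prop)),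
    intervalIntegral.integral_const_mul, intervalIntegral.integral_const_mul] at hparts
  linear_combination hparts

theorem isHillSolution_resonantMode (hg : IsDuffingSolution lam a g v) (h0 : g 0 = 0) :
    IsHillSolution (fun t => a - 3 * lam * g t ^ 2)
      (fun t => lam * (4 * v 0 ^ 2 + 2 * a ^ 2) * g t) (resonantMode lam a g v)
      (fun t => lam * (2 * g t ^ 2 * v t + a * v t
        - squareDrift a g t * (a * g t - lam * g t ^ 3)) + (lam - 2) * a * v t) := by
  have hY := hasDerivAt_squareDrift hg.continuous a
  refine ⟨fun t => ?_, fun t => ?_⟩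
  · refine (((((hg.hasDerivAt t).fun_pow 3).fun_sub
      ((hY t).fun_mul (hg.hasDerivAt_velocity t))).const_mul lam).fun_add
        ((hg.hasDerivAt t).const_mul ((lam - 2) * a))).congr_deriv ?_
    push_cast
    ring
  · have hforce := ((hg.hasDerivAt t).const_mul a).fun_sub
      (((hg.hasDerivAt t).fun_pow 3).const_mul lam)
    refine (((((((hg.hasDerivAt t).fun_pow 2).const_mul 2).fun_mul
      (hg.hasDerivAt_velocity t)).fun_add ((hg.hasDerivAt_velocity t).const_mul a)).fun_sub
        ((hY t).fun_mul hforce)).const_mul lam).fun_add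
          ((hg.hasDerivAt_velocity t).const_mul ((lam - 2) * a)) |>.congr_deriv ?_
    simp only [resonantMode]
    push_cast
    linear_combination 4 * lam * g t * hg.velocity_sq_eq h0 t

theorem integral_resonantMode_mul (hg : IsDuffingSolution lam a g v) (h0 : g 0 = 0)
    (hT : g T = 0) (hmean : ∫ t in (0 : ℝ)..T, g t ^ 2 = T * a) :
    ∫ t in (0 : ℝ)..T, resonantMode lam a g v t * g t = T * (v 0 ^ 2 + lam * a ^ 2 / 2) := by
  have hg_cont := hg.continuous
  have hv_cont := hg.continuous_velocity
  have hY_cont : Continuous (squareDrift a g) :=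
    continuous_iff_continuousAt.2 fun t => (hasDerivAt_squareDrift hg_cont a t).continuousAt
  have hint {F : ℝ → ℝ} (hF : Continuous F) : IntervalIntegrable F MeasureTheory.volume 0 T :=
    hF.intervalIntegrable 0 T
  have hexpand (t : ℝ) : resonantMode lam a g v t * g t
      = lam * g t ^ 4 - lam * (squareDrift a g t * g t * v t) + (lam - 2) * a * g t ^ 2 := by
    rw [resonantMode]; ring
  simp only [hexpand]
  rw [intervalIntegral.integral_add (hint (by fun_prop)) (hint (by fun_prop)),
    intervalIntegral.integral_sub (hint (by fun_prop)) (hint (by fun_prop))]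
  simp only [intervalIntegral.integral_const_mul]
  have hfour := hg.integral_pow_four h0 hT
  have hdrift := hg.integral_squareDrift_mul h0 hT
  rw [hmean] at hfour hdrift ⊢
  linear_combination hfour - lam / 2 * hdrift

/-- The derivative at `μ = 1` of the rescaled solutions `t ↦ μ g (μ t)`. -/
theorem isHillSolution_dilation (hg : IsDuffingSolution lam a g v) :
    IsHillSolution (fun t => a - 3 * lam * g t ^ 2) (fun t => 2 * a * g t)
      (fun t => g t + t * v t) (fun t => 2 * v t + t * (a * g t - lam * g t ^ 3)) := by
  refine ⟨fun t => ?_, fun t => ?_⟩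
  · refine ((hg.hasDerivAt t).fun_add
      ((hasDerivAt_id' t).fun_mul (hg.hasDerivAt_velocity t))).congr_deriv ?_
    ring
  · refine (((hg.hasDerivAt_velocity t).const_mul 2).fun_add ((hasDerivAt_id' t).fun_mul
      (((hg.hasDerivAt t).const_mul a).fun_sub
        (((hg.hasDerivAt t).fun_pow 3).const_mul lam)))).congr_deriv ?_
    push_cast
    ring

variable {c : ℝ} {h h' : ℝ → ℝ}

theorem forcing_eq_zero (hg : IsDuffingSolution lam a g v) (hT : T ≠ 0) (hg0 : g 0 = 0)
    (hgT : g T = 0) (hmean : ∫ t in (0 : ℝ)..T, g t ^ 2 = T * a)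
    (hne : lam * (4 * v 0 ^ 2 + a ^ 2) ≠ 2 * v 0 ^ 2)
    (hh : IsHillSolution (fun t => a - 3 * lam * g t ^ 2) (fun t => 2 * c * g t) h h')
    (hh0 : h 0 = 0) (hhT : h T = 0) (hc : ∫ t in (0 : ℝ)..T, g t * h t = T * c) : c = 0 := by
  have hg_cont := hg.continuous
  have hres := hg.isHillSolution_resonantMode hg0
  have hres_cont := hres.continuous
  have hh_cont := hh.continuous
  have hres0 : resonantMode lam a g v 0 = 0 := by simp [resonantMode, squareDrift, hg0]
  have hresT : resonantMode lam a g v T = 0 := by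
    have hYT : squareDrift a g T = 0 := by
      rw [squareDrift, intervalIntegral.integral_sub
        (Continuous.intervalIntegrable (by fun_prop) _ _) (by simp), hmean]
      simp
    simp [resonantMode, hYT, hgT]
  have hgreen := hres.integral_green hh (by fun_prop) (by fun_prop) 0 T
  have hsplit (t : ℝ) : lam * (4 * v 0 ^ 2 + 2 * a ^ 2) * g t * h t
      - resonantMode lam a g v t * (2 * c * g t) = lam * (4 * v 0 ^ 2 + 2 * a ^ 2) * (g t * h t)
      - 2 * c * (resonantMode lam a g v t * g t) := by ring
  simp only [hsplit, hh0, hhT, hres0, hresT] at hgreen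
  rw [intervalIntegral.integral_sub (Continuous.intervalIntegrable (by fun_prop) _ _)
    (Continuous.intervalIntegrable (by fun_prop) _ _), intervalIntegral.integral_const_mul,
    intervalIntegral.integral_const_mul, hc, hg.integral_resonantMode_mul hg0 hgT hmean] at hgreen
  have hproduct : (T * (lam * (4 * v 0 ^ 2 + a ^ 2) - 2 * v 0 ^ 2)) * c = 0 := by
    linear_combination hgreen
  exact (mul_eq_zero.1 hproduct).resolve_left (mul_ne_zero hT (sub_ne_zero.2 hne))

theorem deriv_eq_zero_of_orthogonal (hg : IsDuffingSolution lam a g v) (hT : T ≠ 0)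
    (hg0 : g 0 = 0) (hgT : g T = 0) (hv0 : v 0 ≠ 0)
    (hh : IsHillSolution (fun t => a - 3 * lam * g t ^ 2) 0 h h')
    (hh0 : h 0 = 0) (hhT : h T = 0) (horth : ∫ t in (0 : ℝ)..T, g t * h t = 0) : h' T = 0 := by
  have hg_cont := hg.continuous
  have hvT : v T ≠ 0 := fun hvT => hv0 (by
    simpa [hvT, hgT, eq_comm (a := (0 : ℝ))] using hg.velocity_sq_eq hg0 T)
  have hgreen := hg.isHillSolution_dilation.integral_green hh (by fun_prop) continuous_zero 0 T
  simpa [mul_assoc, horth, hg0, hgT, hh0, hhT, hT, hvT] using hgreen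

/-- Testing against `resonantMode` removes the nonlocal forcing, testing against the dilation mode
then removes the remaining Cauchy datum. -/
theorem eq_zero_of_linearized (hg : IsDuffingSolution lam a g v) (hT : T ≠ 0) (hg0 : g 0 = 0)
    (hgT : g T = 0) (hv0 : v 0 ≠ 0) (hmean : ∫ t in (0 : ℝ)..T, g t ^ 2 = T * a)
    (hne : lam * (4 * v 0 ^ 2 + a ^ 2) ≠ 2 * v 0 ^ 2)
    (hh : IsHillSolution (fun t => a - 3 * lam * g t ^ 2) (fun t => 2 * c * g t) h h')
    (hh0 : h 0 = 0) (hhT : h T = 0) (hc : ∫ t in (0 : ℝ)..T, g t * h t = T * c) : h = 0 := by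
  have hg_cont := hg.continuous
  obtain rfl := hg.forcing_eq_zero hT hg0 hgT hmean hne hh hh0 hhT hc
  have hhom : IsHillSolution (fun t => a - 3 * lam * g t ^ 2) 0 h h' := by
    simpa [← Pi.zero_def] using hh
  exact hhom.eq_zero_of_cauchyData (by fun_prop) hhT
    (hg.deriv_eq_zero_of_orthogonal hT hg0 hgT hv0 hhom hh0 hhT (by rw [hc, mul_zero]))

theorem eq_zero_of_avg_linearized (hg : IsDuffingSolution lam a g v) (hg0 : g 0 = 0)
    (hgT : g (2 * π) = 0) (hv0 : v 0 ≠ 0) (hmean : avg (fun s => g s ^ 2) = a)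
    (hne : lam * (4 * v 0 ^ 2 + a ^ 2) ≠ 2 * v 0 ^ 2) (hh : ContDiff ℝ 2 h) (hh0 : h 0 = 0)
    (hhT : h (2 * π) = 0)
    (heq : ∀ t, deriv (deriv h) t - (avg (fun s => g s ^ 2) - 3 * lam * g t ^ 2) * h t
      = 2 * avg (fun s => g s * h s) * g t) : h = 0 :=
  hg.eq_zero_of_linearized two_pi_pos.ne' hg0 hgT hv0 (avg_eq_iff.1 hmean) hne
    (.of_contDiff hh fun t => by rw [← hmean]; linear_combination heq t) hh0 hhT
    (integral_eq_two_pi_mul_avg _)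

end IsDuffingSolution

/-- The Jacobi function `Δ(θ) = √(r² cos² θ + sin² θ)` with complementary modulus `r`, its angle
shifted by a quarter period so that the minimum `r` is attained at `θ = 0`. -/
noncomputable def ellipticDelta (r θ : ℝ) : ℝ := √(r ^ 2 * cos θ ^ 2 + sin θ ^ 2)

/-- The complete elliptic integral of the first kind with complementary modulus `r`, normalised to
be `1` at `r = 1`. -/
noncomputable def ellipticK (r : ℝ) : ℝ := avg fun θ => (ellipticDelta r θ)⁻¹

/-- The complete elliptic integral of the second kind with complementary modulus `r`, normalised to
be `1` at `r = 1`. -/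
noncomputable def ellipticE (r : ℝ) : ℝ := avg (ellipticDelta r)

section EllipticIntegrals

variable {r : ℝ}

theorem ellipticDelta_radicand_pos (hr : 0 < r) (θ : ℝ) : 0 < r ^ 2 * cos θ ^ 2 + sin θ ^ 2 := by
  rcases eq_or_ne (sin θ) 0 with hsin | hsin
  · have hcos : cos θ ^ 2 = 1 := by rw [cos_sq', hsin]; ring
    rw [hcos, hsin]
    positivity
  · positivity

theorem ellipticDelta_pos (hr : 0 < r) (θ : ℝ) : 0 < ellipticDelta r θ :=
  sqrt_pos.2 (ellipticDelta_radicand_pos hr θ)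

theorem ellipticDelta_sq (r θ : ℝ) : ellipticDelta r θ ^ 2 = r ^ 2 + (1 - r ^ 2) * sin θ ^ 2 := by
  rw [ellipticDelta, sq_sqrt (by positivity), cos_sq']
  ring

theorem ellipticDelta_zero (hr : 0 ≤ r) : ellipticDelta r 0 = r := by
  simp [ellipticDelta, sqrt_sq hr]

theorem even_ellipticDelta (r : ℝ) : Function.Even (ellipticDelta r) := fun θ => by
  simp [ellipticDelta]

theorem periodic_ellipticDelta (r : ℝ) : Function.Periodic (ellipticDelta r) (2 * π) := fun θ => by
  simp [ellipticDelta]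

theorem contDiff_ellipticDelta (hr : 0 < r) {n : ℕ∞ω} : ContDiff ℝ n (ellipticDelta r) :=
  ContDiff.sqrt (by fun_prop) fun θ => (ellipticDelta_radicand_pos hr θ).ne'

theorem continuous_ellipticDelta (r : ℝ) : Continuous (ellipticDelta r) := by
  unfold ellipticDelta
  fun_prop

theorem continuous_inv_ellipticDelta (hr : 0 < r) : Continuous fun θ => (ellipticDelta r θ)⁻¹ :=
  (continuous_ellipticDelta r).inv₀ fun θ => (ellipticDelta_pos hr θ).ne'

theorem hasDerivAt_ellipticDelta (hr : 0 < r) (θ : ℝ) :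
    HasDerivAt (ellipticDelta r) ((1 - r ^ 2) * sin θ * cos θ / ellipticDelta r θ) θ := by
  have hsqrt := ((((hasDerivAt_cos θ).fun_pow 2).const_mul (r ^ 2)).fun_add
    ((hasDerivAt_sin θ).fun_pow 2)).sqrt (ellipticDelta_radicand_pos hr θ).ne'
  refine hsqrt.congr_deriv ?_
  change _ / (2 * ellipticDelta r θ) = _
  have := (ellipticDelta_pos hr θ).ne'
  field_simp
  push_cast
  ring

/-- Concavity of the square root, with weights `cos² θ` and `sin² θ`. -/
theorem le_ellipticDelta (r θ : ℝ) : r + (1 - r) * sin θ ^ 2 ≤ ellipticDelta r θ := by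
  refine le_sqrt_of_sq_le ?_
  have hgap : r ^ 2 * cos θ ^ 2 + sin θ ^ 2 - (r + (1 - r) * sin θ ^ 2) ^ 2
      = (1 - r) ^ 2 * sin θ ^ 2 * cos θ ^ 2 := by rw [cos_sq']; ring
  rw [← sub_nonneg, hgap]
  positivity

theorem inv_ellipticDelta_le (hr : 0 < r) (θ : ℝ) :
    (ellipticDelta r θ)⁻¹ ≤ r⁻¹ + (1 - r⁻¹) * sin θ ^ 2 := by
  have hlower : 0 < r + (1 - r) * sin θ ^ 2 := by
    have hweights : r + (1 - r) * sin θ ^ 2 = r * cos θ ^ 2 + sin θ ^ 2 := by rw [cos_sq']; ring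
    have hrad := ellipticDelta_radicand_pos (sqrt_pos.2 hr) θ
    rwa [sq_sqrt hr.le, ← hweights] at hrad
  refine (inv_anti₀ hlower (le_ellipticDelta r θ)).trans ((inv_le_iff_one_le_mul₀' hlower).2 ?_)
  have hgap : (r + (1 - r) * sin θ ^ 2) * (r⁻¹ + (1 - r⁻¹) * sin θ ^ 2) - 1
      = (1 - r) ^ 2 * r⁻¹ * sin θ ^ 2 * cos θ ^ 2 := by
    rw [cos_sq']
    field_simp
    ring
  rw [← sub_nonneg, hgap]
  positivity

theorem ellipticK_pos (hr : 0 < r) : 0 < ellipticK r :=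
  mul_pos (by positivity) (intervalIntegral.intervalIntegral_pos_of_pos
    ((continuous_inv_ellipticDelta hr).intervalIntegrable _ _)
    (fun θ => inv_pos.2 (ellipticDelta_pos hr θ)) two_pi_pos)

theorem ellipticK_one : ellipticK 1 = 1 := by
  simp [ellipticK, ellipticDelta, avg_eq_iff]

theorem ellipticE_one : ellipticE 1 = 1 := by
  simp [ellipticE, ellipticDelta, avg_eq_iff]

theorem ellipticE_le_one (hr : 0 ≤ r) (hr1 : r ≤ 1) : ellipticE r ≤ 1 := by
  rw [← ellipticE_one]
  refine avg_mono (continuous_ellipticDelta r) (continuous_ellipticDelta 1) fun θ => ?_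
  unfold ellipticDelta
  gcongr

theorem half_one_add_le_ellipticE (r : ℝ) : (1 + r) / 2 ≤ ellipticE r := by
  have hcont : Continuous fun θ => (1 - r) * sin θ ^ 2 := by fun_prop
  have hmono := avg_mono (hcont.const_add r) (continuous_ellipticDelta r) (le_ellipticDelta r)
  rw [avg_const_add r hcont, avg_const_mul, avg_sin_sq] at hmono
  rw [ellipticE]
  linarith

theorem ellipticK_le_half_one_add_inv (hr : 0 < r) : ellipticK r ≤ (1 + r⁻¹) / 2 := by
  have hcont : Continuous fun θ => (1 - r⁻¹) * sin θ ^ 2 := by fun_prop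
  have hmono := avg_mono (continuous_inv_ellipticDelta hr) (hcont.const_add r⁻¹)
    (inv_ellipticDelta_le hr)
  rw [avg_const_add r⁻¹ hcont, avg_const_mul, avg_sin_sq] at hmono
  rw [ellipticK]
  linarith

theorem mul_ellipticK_le_ellipticE (hr : 0 < r) : r * ellipticK r ≤ ellipticE r :=
  calc r * ellipticK r ≤ r * ((1 + r⁻¹) / 2) := by gcongr; exact ellipticK_le_half_one_add_inv hr
    _ = (1 + r) / 2 := by field_simp; ring
    _ ≤ ellipticE r := half_one_add_le_ellipticE r

theorem ellipticDelta_le_add {θ : ℝ} (hr : 0 ≤ r) (hθ : 0 ≤ θ) : ellipticDelta r θ ≤ r + θ := by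
  have hsin : sin θ ^ 2 ≤ θ ^ 2 := sq_le_sq.2 abs_sin_le_abs
  refine sqrt_le_iff.2 ⟨by positivity, ?_⟩
  nlinarith [mul_nonneg hr hθ, mul_le_of_le_one_right (sq_nonneg r) (cos_sq_le_one θ)]

theorem integral_inv_add {T : ℝ} (hr : 0 < r) (hT : 0 ≤ T) :
    ∫ θ in (0 : ℝ)..T, (r + θ)⁻¹ = log (r + T) - log r := by
  rw [intervalIntegral.integral_comp_add_left (fun x => x⁻¹), add_zero,
    integral_inv_of_pos hr (by positivity), log_div (by positivity) hr.ne']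

theorem neg_log_le_ellipticK (hr : 0 < r) : -log r ≤ 2 * π * ellipticK r := by
  have hcont : ContinuousOn (fun θ : ℝ => (r + θ)⁻¹) (Set.uIcc 0 (2 * π)) :=
    ContinuousOn.inv₀ (by fun_prop) fun θ hθ => by
      rw [Set.uIcc_of_le two_pi_pos.le] at hθ
      linarith [hθ.1]
  calc -log r ≤ log (r + 2 * π) - log r := by
        linarith [log_nonneg (by linarith [pi_gt_three] : (1 : ℝ) ≤ r + 2 * π)]
    _ = ∫ θ in (0 : ℝ)..(2 * π), (r + θ)⁻¹ := (integral_inv_add hr two_pi_pos.le).symm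
    _ ≤ ∫ θ in (0 : ℝ)..(2 * π), (ellipticDelta r θ)⁻¹ :=
        intervalIntegral.integral_mono_on two_pi_pos.le hcont.intervalIntegrable
          ((continuous_inv_ellipticDelta hr).intervalIntegrable _ _) fun θ hθ =>
            inv_anti₀ (ellipticDelta_pos hr θ) (ellipticDelta_le_add hr.le hθ.1)
    _ = 2 * π * ellipticK r := integral_eq_two_pi_mul_avg _

theorem tendsto_ellipticK_atTop : Filter.Tendsto ellipticK (𝓝[>] 0) Filter.atTop := by
  have hlog : Filter.Tendsto (fun r => -log r / (2 * π)) (𝓝[>] 0) Filter.atTop :=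
    (Filter.tendsto_neg_atBot_atTop.comp tendsto_log_nhdsGT_zero).atTop_div_const two_pi_pos
  refine Filter.tendsto_atTop_mono' _ ?_ hlog
  filter_upwards [self_mem_nhdsWithin] with r hr
  rw [div_le_iff₀' two_pi_pos]
  exact neg_log_le_ellipticK hr

theorem continuousOn_ellipticK : ContinuousOn ellipticK (Set.Ioi 0) := by
  rw [continuousOn_iff_continuous_domRestrict]
  have hintegrand : Continuous fun p : Set.Ioi (0 : ℝ) × ℝ => (ellipticDelta p.1 p.2)⁻¹ := by
    refine Continuous.inv₀ ?_ fun p => (ellipticDelta_pos p.1.2 p.2).ne'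
    unfold ellipticDelta
    fun_prop
  exact (intervalIntegral.continuous_parametric_intervalIntegral_of_continuous'
    (f := fun (r : Set.Ioi (0 : ℝ)) θ => (ellipticDelta r θ)⁻¹) hintegrand _ _).const_mul _

theorem continuous_ellipticE : Continuous ellipticE := by
  have hintegrand : Continuous fun p : ℝ × ℝ => ellipticDelta p.1 p.2 := by
    unfold ellipticDelta
    fun_prop
  exact (intervalIntegral.continuous_parametric_intervalIntegral_of_continuous'
    (f := ellipticDelta) hintegrand _ _).const_mul _

end EllipticIntegrals

/-- `r` is a complementary modulus for which `⟨g²⟩` equals the linear coefficient of the Duffing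
equation solved by the elliptic sine wave `g` of modulus `r`. -/
structure IsMeanModulus (lam r : ℝ) : Prop where
  pos : 0 < r
  lt_one : r < 1
  mean_eq : lam * (1 - 2 * r ^ 2) * ellipticK r = 2 * (ellipticE r - r ^ 2 * ellipticK r)

theorem exists_isMeanModulus {lam : ℝ} (hlam : 0 < lam) : ∃ r, IsMeanModulus lam r := by
  set Φ : ℝ → ℝ := fun r =>
    2 * (ellipticE r - r ^ 2 * ellipticK r) - lam * (1 - 2 * r ^ 2) * ellipticK r with hΦ
  obtain ⟨r₀, hK, hr₀, hr₀_lt⟩ : ∃ r, 4 / lam < ellipticK r ∧ r ∈ Set.Ioo (0 : ℝ) (1 / 2) :=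
    ((tendsto_ellipticK_atTop.eventually_gt_atTop (4 / lam)).and
      (Ioo_mem_nhdsGT one_half_pos)).exists
  have hΦ_cont : ContinuousOn Φ (Set.Icc r₀ 1) := by
    have hKc : ContinuousOn ellipticK (Set.Icc r₀ 1) :=
      continuousOn_ellipticK.mono fun r hr => hr₀.trans_le hr.1
    have hEc := continuous_ellipticE
    fun_prop
  have hΦ_neg : Φ r₀ < 0 := by
    have hE : ellipticE r₀ ≤ 1 := ellipticE_le_one hr₀.le (by linarith)
    have hlamK : 4 < lam * ellipticK r₀ := (div_lt_iff₀' hlam).1 hK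
    have hhalf : 1 / 2 ≤ 1 - 2 * r₀ ^ 2 := by nlinarith
    have hnonneg : 0 ≤ r₀ ^ 2 * ellipticK r₀ := by have := ellipticK_pos hr₀; positivity
    simp only [hΦ]
    nlinarith
  have hΦ_one : 0 < Φ 1 := by
    simp only [hΦ, ellipticK_one, ellipticE_one]
    linarith
  obtain ⟨r, hr, hr_zero⟩ := intermediate_value_Icc (by linarith) hΦ_cont ⟨hΦ_neg.le, hΦ_one.le⟩
  have hr_ne : r ≠ 1 := by rintro rfl; exact hΦ_one.ne' hr_zero
  exact ⟨r, hr₀.trans_le hr.1, hr.2.lt_of_ne hr_ne, (sub_eq_zero.1 hr_zero).symm⟩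

namespace IsMeanModulus

variable {lam r : ℝ}

theorem one_sub_sq_pos (hr : IsMeanModulus lam r) : 0 < 1 - r ^ 2 :=
  sub_pos.2 (pow_lt_one₀ hr.pos.le hr.lt_one two_ne_zero)

theorem two_mul_le (hr : IsMeanModulus lam r) : 2 * (r * (1 - r)) ≤ lam * (1 - 2 * r ^ 2) := by
  refine le_of_mul_le_mul_right ?_ (ellipticK_pos hr.pos)
  rw [hr.mean_eq]
  linarith [mul_ellipticK_le_ellipticE hr.pos]

theorem one_sub_two_mul_sq_pos (hr : IsMeanModulus lam r) (hlam : 0 < lam) : 0 < 1 - 2 * r ^ 2 :=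
  pos_of_mul_pos_right ((mul_pos two_pos (mul_pos hr.pos (sub_pos.2 hr.lt_one))).trans_le
    hr.two_mul_le) hlam.le

theorem energy_lt (hr : IsMeanModulus lam r) (hlam : 0 < lam) :
    4 * ((1 - r ^ 2) * r ^ 2)
      < lam ^ 2 * (1 - 2 * r ^ 2) ^ 2 + 8 * ((1 - r ^ 2) * r ^ 2) * lam := by
  have hr0 := hr.pos
  have hr1 := hr.lt_one
  have hm := hr.one_sub_two_mul_sq_pos hlam
  have hbound := hr.two_mul_le
  have hprod : 0 < r * (1 - r) := mul_pos hr0 (by linarith)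
  have hquartic : 0 < (1 - r ^ 2) * r ^ 2 := mul_pos hr.one_sub_sq_pos (by positivity)
  have hlam_ge : 2 * (r * (1 - r)) ≤ lam :=
    hbound.trans (by nlinarith [mul_pos hlam (pow_pos hr0 2)])
  calc 4 * ((1 - r ^ 2) * r ^ 2)
      < (2 * (r * (1 - r))) ^ 2 + 8 * ((1 - r ^ 2) * r ^ 2) * (2 * (r * (1 - r))) := by
        nlinarith [mul_pos (mul_pos (pow_pos hr0 2) hprod) hm]
    _ ≤ (lam * (1 - 2 * r ^ 2)) ^ 2 + 8 * ((1 - r ^ 2) * r ^ 2) * lam := by gcongr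
    _ = _ := by ring

theorem energy_ne {A b : ℝ} (hr : IsMeanModulus lam r) (hlam : 0 < lam)
    (hb : b ≠ 0) (hA : lam * A ^ 2 = 2 * (1 - r ^ 2) * b ^ 2) :
    lam * (4 * (A * b * r) ^ 2 + (b ^ 2 * (1 - 2 * r ^ 2)) ^ 2) ≠ 2 * (A * b * r) ^ 2 := by
  intro heq
  have hscaled : b ^ 4 * (lam ^ 2 * (1 - 2 * r ^ 2) ^ 2 + 8 * ((1 - r ^ 2) * r ^ 2) * lam)
      = b ^ 4 * (4 * ((1 - r ^ 2) * r ^ 2)) := by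
    linear_combination lam * heq + (2 * b ^ 2 * r ^ 2 - 4 * lam * b ^ 2 * r ^ 2) * hA
  exact (hr.energy_lt hlam).ne' (mul_left_cancel₀ (pow_ne_zero 4 hb) hscaled)

end IsMeanModulus

/-- `ψ` is an amplitude function of complementary modulus `r` and speed `b`, odd and winding once
around the circle per period `2π`. -/
structure IsAmplitude (r b : ℝ) (ψ : ℝ ≃o ℝ) : Prop where
  contDiff : ContDiff ℝ ω ψ
  hasDerivAt : ∀ t, HasDerivAt ψ (b * ellipticDelta r (ψ t)) t
  odd : Function.Odd ψ
  add_two_pi : ∀ t, ψ (t + 2 * π) = ψ t + 2 * π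

theorem exists_isAmplitude {r : ℝ} (hr : 0 < r) : ∃ ψ, IsAmplitude r (ellipticK r) ψ := by
  have hK := ellipticK_pos hr
  obtain ⟨ψ, hcont, hderiv, hodd, hwind⟩ := exists_orderIso_hasDerivAt_inv (T := 2 * π)
    (f := fun θ => (ellipticK r)⁻¹ * (ellipticDelta r θ)⁻¹)
    (contDiff_const.mul ((contDiff_ellipticDelta hr).inv fun θ => (ellipticDelta_pos hr θ).ne'))
    (fun θ => mul_pos (inv_pos.2 hK) (inv_pos.2 (ellipticDelta_pos hr θ)))
    (fun θ => by simp only [even_ellipticDelta r θ])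
    (fun θ => by simp only [periodic_ellipticDelta r θ])
    two_pi_pos
  have hperiod : ∫ θ in (0 : ℝ)..(2 * π), (ellipticK r)⁻¹ * (ellipticDelta r θ)⁻¹ = 2 * π := by
    rw [intervalIntegral.integral_const_mul, integral_eq_two_pi_mul_avg, ← ellipticK,
      mul_left_comm, inv_mul_cancel₀ hK.ne', mul_one]
  refine ⟨ψ, hcont, fun t => (hderiv t).congr_deriv ?_, hodd, fun t => ?_⟩
  · rw [mul_inv, inv_inv, inv_inv]
  · rw [← hwind, hperiod]

namespace IsAmplitude

variable {r b A lam : ℝ} {ψ : ℝ ≃o ℝ}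

theorem map_zero (hψ : IsAmplitude r b ψ) : ψ 0 = 0 := hψ.odd.map_zero

theorem map_two_pi (hψ : IsAmplitude r b ψ) : ψ (2 * π) = 2 * π := by
  simpa [hψ.map_zero] using hψ.add_two_pi 0

theorem periodic_sin_comp (hψ : IsAmplitude r b ψ) :
    Function.Periodic (fun t => sin (ψ t)) (2 * π) := fun t => by
  simp only [hψ.add_two_pi, sin_add_two_pi]

theorem two_pi_le_of_periodic_sin_comp (hψ : IsAmplitude r b ψ) {p : ℝ} (hp : 0 < p)
    (hper : Function.Periodic (fun t => sin (ψ t)) p) : 2 * π ≤ p := by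
  by_contra! hlt
  obtain ⟨t, ht⟩ := ψ.surjective (π / 2)
  have hadvance : ψ t < ψ (t + p) := ψ.strictMono (by linarith)
  have hless : ψ (t + p) < ψ t + 2 * π := by
    rw [← hψ.add_two_pi]
    exact ψ.strictMono (by linarith)
  have hcos : cos (ψ (t + p) - ψ t) = 1 := by
    rw [ht, cos_sub_pi_div_two, show sin (ψ (t + p)) = sin (ψ t) from hper t, ht, sin_pi_div_two]
  have heq := (cos_eq_one_iff_of_lt_of_lt (by linarith [two_pi_pos]) (by linarith)).1 hcos
  linarith

theorem avg_comp_mul (hψ : IsAmplitude r b ψ) {F : ℝ → ℝ} (hF : Continuous F) :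
    avg (fun t => F (ψ t) * (b * ellipticDelta r (ψ t))) = avg F := by
  have hderiv_cont : Continuous fun t => b * ellipticDelta r (ψ t) :=
    ((continuous_ellipticDelta r).comp ψ.continuous).const_mul b
  have hsubst := intervalIntegral.integral_comp_mul_deriv (a := 0) (b := 2 * π)
    (fun t _ => hψ.hasDerivAt t) hderiv_cont.continuousOn hF
  rw [hψ.map_zero, hψ.map_two_pi] at hsubst
  exact congrArg (1 / (2 * π) * ·) hsubst

theorem mul_avg_sin_sq (hψ : IsAmplitude r b ψ) :
    b * (r ^ 2 + (1 - r ^ 2) * avg fun t => sin (ψ t) ^ 2) = ellipticE r := by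
  have hψ_cont := ψ.continuous
  rw [ellipticE, ← hψ.avg_comp_mul (continuous_ellipticDelta r), ← avg_const_mul,
    ← avg_const_add _ (by fun_prop), ← avg_const_mul]
  congr 1 with t
  linear_combination -b * ellipticDelta_sq r (ψ t)

theorem isDuffingSolution (hψ : IsAmplitude r b ψ) (hr : 0 < r)
    (hA : lam * A ^ 2 = 2 * (1 - r ^ 2) * b ^ 2) :
    IsDuffingSolution lam (b ^ 2 * (1 - 2 * r ^ 2)) (fun t => A * sin (ψ t))
      (fun t => A * b * (cos (ψ t) * ellipticDelta r (ψ t))) := by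
  refine ⟨fun t => ((hψ.hasDerivAt t).sin.const_mul A).congr_deriv (by ring), fun t => ?_⟩
  refine (((hψ.hasDerivAt t).cos.fun_mul ((hasDerivAt_ellipticDelta hr (ψ t)).comp t
    (hψ.hasDerivAt t))).const_mul (A * b)).congr_deriv ?_
  have hΔ := (ellipticDelta_pos hr (ψ t)).ne'
  simp only [Function.comp_apply]
  field_simp
  linear_combination -(A * b ^ 2 * sin (ψ t)) * ellipticDelta_sq r (ψ t)
    + A * b ^ 2 * (1 - r ^ 2) * sin (ψ t) * cos_sq' (ψ t) + A * sin (ψ t) ^ 3 * hA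

theorem avg_sq_eq (hψ : IsAmplitude r (ellipticK r) ψ) (hr : IsMeanModulus lam r) (hlam : lam ≠ 0)
    (hA : lam * A ^ 2 = 2 * (1 - r ^ 2) * ellipticK r ^ 2) :
    avg (fun t => (A * sin (ψ t)) ^ 2) = ellipticK r ^ 2 * (1 - 2 * r ^ 2) := by
  simp only [mul_pow, avg_const_mul]
  apply mul_left_cancel₀ hlam
  linear_combination (avg fun t => sin (ψ t) ^ 2) * hA + 2 * ellipticK r * hψ.mul_avg_sin_sq
    - ellipticK r * hr.mean_eq

theorem velocity_zero (hψ : IsAmplitude r b ψ) (hr : 0 ≤ r) :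
    A * b * (cos (ψ 0) * ellipticDelta r (ψ 0)) = A * b * r := by
  rw [hψ.map_zero, cos_zero, one_mul, ellipticDelta_zero hr]

end IsAmplitude

theorem exists_pos_mul_sq_eq {c d : ℝ} (hc : 0 < c) (hd : 0 < d) : ∃ A, 0 < A ∧ c * A ^ 2 = d :=
  ⟨√(d / c), sqrt_pos.2 (by positivity), by rw [sq_sqrt (by positivity), mul_div_cancel₀ d hc.ne']⟩

theorem stmt_11_general (lam : ℝ) (hlam : 0 < lam) :
    ∃ g : ℝ → ℝ,
      (∀ t : ℝ, AnalyticAt ℝ g t) ∧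
      (∀ t : ℝ, g (-t) = -g t) ∧
      Function.Periodic g (2 * π) ∧
      (∀ p : ℝ, 0 < p → Function.Periodic g p → 2 * π ≤ p) ∧
      g ≠ 0 ∧
      (∀ t : ℝ, deriv (deriv g) t - avg (fun s => g s ^ 2) * g t + lam * g t ^ 3 = 0) ∧
      (∀ h : ℝ → ℝ, ContDiff ℝ 2 h → h 0 = 0 → h (2 * π) = 0 →
        (∀ t : ℝ, deriv (deriv h) t - (avg (fun s => g s ^ 2) - 3 * lam * g t ^ 2) * h t
            = 2 * avg (fun s => g s * h s) * g t) →
        h = 0) := by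
  obtain ⟨r, hr⟩ := exists_isMeanModulus hlam
  obtain ⟨ψ, hψ⟩ := exists_isAmplitude hr.pos
  have hK := ellipticK_pos hr.pos
  obtain ⟨A, hA, hA_sq⟩ : ∃ A, 0 < A ∧ lam * A ^ 2 = 2 * (1 - r ^ 2) * ellipticK r ^ 2 :=
    exists_pos_mul_sq_eq hlam (mul_pos (mul_pos two_pos hr.one_sub_sq_pos) (pow_pos hK 2))
  have hg := hψ.isDuffingSolution hr.pos hA_sq
  have hmean := hψ.avg_sq_eq hr hlam.ne' hA_sq
  refine ⟨fun t => A * sin (ψ t), fun t => ?_, fun t => ?_, fun t => ?_, fun p hp hper => ?_, ?_,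
    fun t => ?_, fun h hh h0 hT heq => ?_⟩
  · exact analyticAt_const.mul (analyticAt_sin.comp hψ.contDiff.contDiffAt.analyticAt)
  · simp only [hψ.odd t, sin_neg, mul_neg]
  · simp only [hψ.periodic_sin_comp t]
  · exact hψ.two_pi_le_of_periodic_sin_comp hp fun t => mul_left_cancel₀ hA.ne' (hper t)
  · exact Function.ne_iff.2 ⟨ψ.symm (π / 2), by simp [hA.ne']⟩
  · rw [hg.deriv_deriv, hmean]
    ring
  · refine hg.eq_zero_of_avg_linearized (by simp [hψ.map_zero]) (by simp [hψ.map_two_pi])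
      ?_ hmean ?_ hh h0 hT heq
    · simp only [hψ.velocity_zero hr.pos.le]
      exact mul_ne_zero (mul_ne_zero hA.ne' hK.ne') hr.pos.ne'
    · simp only [hψ.velocity_zero hr.pos.le]
      exact hr.energy_ne hlam hK.ne' hA_sq

theorem stmt_11 (lam : ℝ) (hlam : 0 < lam) :
    ∃ g : ℝ → ℝ,
      (∀ t : ℝ, AnalyticAt ℝ g t) ∧
      (∀ t : ℝ, g (-t) = -g t) ∧
      Function.Periodic g (2 * π) ∧
      (∀ p : ℝ, 0 < p → Function.Periodic g p → 2 * π ≤ p) ∧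
      g ≠ 0 ∧
      (∀ t : ℝ, deriv (deriv g) t - avg (fun s => g s ^ 2) * g t + lam * g t ^ 3 = 0) ∧
      (∀ h : ℝ → ℝ, ContDiff ℝ 2 h → (∀ t : ℝ, h (-t) = -h t) →
        Function.Periodic h (2 * π) →
        (∀ t : ℝ, deriv (deriv h) t - (avg (fun s => g s ^ 2) - 3 * lam * g t ^ 2) * h t
            = 2 * avg (fun s => g s * h s) * g t) →
        h = 0) := by
  obtain ⟨g, han, hodd, hper, hmin, hne, heq, hnd⟩ := stmt_11_general lam hlam
  exact ⟨g, han, hodd, hper, hmin, hne, heq, fun h hh ho hp => hnd h hh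
    (Function.Odd.map_zero ho) (hp.eq.trans (Function.Odd.map_zero ho))⟩
end

section
/- (i) For every λ > 0 there exist V > 0, Ω > 0 and m ∈ (−∞, −1) such that g(t) := V·sn(Ωt, m) is odd, 2π-periodic with minimal period 2π, and satisfies g'' − ⟨g²⟩ g + λ g³ = 0 on ℝ. (ii) For every λ ∈ (0, 1) there exist V > 0, Ω > 0 and m ∈ (0, 1) such that g(t) := V·sn(Ωt, m) is odd, 2π-periodic with minimal period 2π, and satisfies g'' + ⟨g²⟩ g − λ g³ = 0 on ℝ. -/
open Real

/-- Incomplete elliptic integral of the first kind `F(φ, m)`. -/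
noncomputable def Fm (m φ : ℝ) : ℝ := ∫ θ in (0:ℝ)..φ, 1 / Real.sqrt (1 - m * Real.sin θ ^ 2)

/-- The Jacobi elliptic sine `sn(t, m) = sin(F_m⁻¹(t))`. -/
noncomputable def sn (t m : ℝ) : ℝ := Real.sin (Function.invFun (Fm m) t)

/-!
`sn` satisfies `sn'' = -(1 + m) sn + 2 m sn³`. Rescaled to period `2π` and amplitude `V`, it
therefore solves `g'' + α ⟨g²⟩ g - β g³ = 0` for a suitable `V` as soon as `m β > 0` and the mean
`r(m)` of `sn(·, m)²` over a period satisfies `2 m α r(m) = β (1 + m)`. For `(α, β) = ±(1, λ)` this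
is the same equation for `m`, solved by the intermediate value theorem on `(-∞, -1)` and on `(0, 1)`
from the limits of `r` at the ends of `(-∞, 1)`. As `m → 1⁻` the period diverges logarithmically
while the integral of `1 - sn²` stays bounded, so `r → 1`; the transformation `m ↦ m / (m - 1)`,
which exchanges the two ends, satisfies `r(m) + r(m / (m - 1)) = 1`, so `r → 0` as `m → -∞`.
-/

section JacobiElliptic

open Set Filter Topology

variable {m : ℝ}

/-- Jacobi's `Δ(θ) = √(1 - m sin² θ)`, the reciprocal of the integrand of `Fm`. -/
noncomputable def jacobiDelta (m θ : ℝ) : ℝ := √(1 - m * sin θ ^ 2)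

lemma one_sub_mul_sin_sq_pos (hm : m < 1) (θ : ℝ) : 0 < 1 - m * sin θ ^ 2 := by
  rcases le_total m 0 with h | h
  · nlinarith [sq_nonneg (sin θ)]
  · nlinarith [sin_sq_le_one θ]

lemma jacobiDelta_pos (hm : m < 1) (θ : ℝ) : 0 < jacobiDelta m θ :=
  sqrt_pos.2 (one_sub_mul_sin_sq_pos hm θ)

lemma jacobiDelta_sq (hm : m < 1) (θ : ℝ) : jacobiDelta m θ ^ 2 = 1 - m * sin θ ^ 2 :=
  sq_sqrt (one_sub_mul_sin_sq_pos hm θ).le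

lemma continuous_jacobiDelta (m : ℝ) : Continuous (jacobiDelta m) := by
  unfold jacobiDelta
  fun_prop

lemma continuous_div_jacobiDelta (hm : m < 1) {f : ℝ → ℝ} (hf : Continuous f) :
    Continuous fun θ => f θ / jacobiDelta m θ :=
  hf.div (continuous_jacobiDelta m) fun θ => (jacobiDelta_pos hm θ).ne'

lemma intervalIntegrable_div_jacobiDelta (hm : m < 1) {f : ℝ → ℝ} (hf : Continuous f) (a b : ℝ) :
    IntervalIntegrable (fun θ => f θ / jacobiDelta m θ) MeasureTheory.volume a b :=
  (continuous_div_jacobiDelta hm hf).intervalIntegrable a b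

lemma periodic_one_div_jacobiDelta (m : ℝ) :
    Function.Periodic (fun θ => 1 / jacobiDelta m θ) (2 * π) := fun θ => by
  simp only [jacobiDelta, sin_add_two_pi]

lemma hasDerivAt_jacobiDelta (hm : m < 1) (θ : ℝ) :
    HasDerivAt (jacobiDelta m) (-(m * sin θ * cos θ) / jacobiDelta m θ) θ := by
  have hradicand : HasDerivAt (fun θ => 1 - m * sin θ ^ 2) (-(m * (2 * sin θ * cos θ))) θ := by
    simpa using (((hasDerivAt_sin θ).fun_pow 2).const_mul m).const_sub 1
  refine (hradicand.sqrt (one_sub_mul_sin_sq_pos hm θ).ne').congr_deriv ?_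
  rw [show -(m * (2 * sin θ * cos θ)) = 2 * -(m * sin θ * cos θ) by ring]
  exact mul_div_mul_left _ _ two_ne_zero

lemma abs_cos_le_jacobiDelta (hm : m < 1) (θ : ℝ) : |cos θ| ≤ jacobiDelta m θ := by
  refine abs_le_sqrt ?_
  nlinarith [sin_sq_add_cos_sq θ, sq_nonneg (sin θ)]

lemma jacobiDelta_le (hm : m < 1) (θ : ℝ) : jacobiDelta m θ ≤ √(1 - m) + |cos θ| := by
  refine sqrt_le_iff.2 ⟨by positivity, ?_⟩
  have hsq : √(1 - m) ^ 2 = 1 - m := sq_sqrt (by linarith)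
  have hcross : 0 ≤ √(1 - m) * |cos θ| := by positivity
  nlinarith [sin_sq_add_cos_sq θ, sq_abs (cos θ), sq_nonneg (cos θ)]

lemma div_sub_one_lt_one (hm : m < 1) : m / (m - 1) < 1 :=
  (div_lt_one_of_neg (by linarith)).2 (by linarith)

lemma jacobiDelta_div_sub_one_add_pi_div_two (hm : m < 1) (θ : ℝ) :
    jacobiDelta (m / (m - 1)) (θ + π / 2) = jacobiDelta m θ / √(1 - m) := by
  rw [jacobiDelta, jacobiDelta, ← sqrt_div (one_sub_mul_sin_sq_pos hm θ).le, sin_add_pi_div_two,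
    cos_sq']
  have hm₁ : 1 - m ≠ 0 := by linarith
  have hm₂ : m - 1 ≠ 0 := by linarith
  congr 1
  field_simp
  ring

lemma hasDerivAt_Fm (hm : m < 1) (φ : ℝ) : HasDerivAt (Fm m) (1 / jacobiDelta m φ) φ :=
  ((continuous_div_jacobiDelta hm continuous_const).integral_hasStrictDerivAt 0 φ).hasDerivAt

lemma continuous_Fm (hm : m < 1) : Continuous (Fm m) :=
  continuous_iff_continuousAt.2 fun φ => (hasDerivAt_Fm hm φ).continuousAt

lemma strictMono_Fm (hm : m < 1) : StrictMono (Fm m) :=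
  strictMono_of_hasDerivAt_pos (hasDerivAt_Fm hm) fun φ => one_div_pos.2 (jacobiDelta_pos hm φ)

lemma surjective_Fm (hm : m < 1) : Function.Surjective (Fm m) := by
  have hint := intervalIntegrable_div_jacobiDelta hm (f := fun _ => 1) continuous_const 0 (2 * π)
  have hpos (θ : ℝ) : 0 < 1 / jacobiDelta m θ := one_div_pos.2 (jacobiDelta_pos hm θ)
  have hper := periodic_one_div_jacobiDelta m
  exact (continuous_Fm hm).surjective
    (hper.tendsto_atTop_intervalIntegral_of_pos' hint hpos two_pi_pos)
    (hper.tendsto_atBot_intervalIntegral_of_pos' hint hpos two_pi_pos)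

lemma Fm_zero (m : ℝ) : Fm m 0 = 0 := intervalIntegral.integral_same

lemma Fm_neg (m φ : ℝ) : Fm m (-φ) = -Fm m φ := by
  have h := intervalIntegral.integral_comp_neg (a := 0) (b := φ)
    (fun θ => 1 / √(1 - m * sin θ ^ 2))
  simp only [sin_neg, neg_sq, neg_zero] at h
  rw [Fm, Fm, intervalIntegral.integral_symm, h]

/-- The period `4K(m)` of `sn(·, m)`. -/
noncomputable def snPeriod (m : ℝ) : ℝ := Fm m (2 * π)

lemma Fm_add_two_pi (hm : m < 1) (φ : ℝ) : Fm m (φ + 2 * π) = Fm m φ + snPeriod m := by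
  have hper := periodic_one_div_jacobiDelta m
  have h := hper.intervalIntegral_add_eq_add 0 φ
    (intervalIntegrable_div_jacobiDelta hm continuous_const)
  rwa [zero_add] at h

lemma snPeriod_pos (hm : m < 1) : 0 < snPeriod m :=
  (Fm_zero m).symm.trans_lt (strictMono_Fm hm two_pi_pos)

/-- Jacobi's amplitude `am(t, m)`, the inverse of `Fm m`. -/
noncomputable def am (t m : ℝ) : ℝ := Function.invFun (Fm m) t

/-- The Jacobi elliptic cosine `cn(t, m) = cos(am(t, m))`. -/
noncomputable def cn (t m : ℝ) : ℝ := cos (am t m)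

/-- The Jacobi delta amplitude `dn(t, m) = Δ(am(t, m))`. -/
noncomputable def dn (t m : ℝ) : ℝ := jacobiDelta m (am t m)

lemma am_Fm (hm : m < 1) (φ : ℝ) : am (Fm m φ) m = φ :=
  Function.leftInverse_invFun (strictMono_Fm hm).injective φ

lemma Fm_am (hm : m < 1) (t : ℝ) : Fm m (am t m) = t :=
  Function.rightInverse_invFun (surjective_Fm hm) t

lemma sn_Fm (hm : m < 1) (φ : ℝ) : sn (Fm m φ) m = sin φ :=
  congrArg sin (am_Fm hm φ)

lemma continuous_am (hm : m < 1) : Continuous fun t => am t m := by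
  have hinv : (fun t => am t m) =
      ((strictMono_Fm hm).orderIsoOfSurjective _ (surjective_Fm hm)).symm := by
    funext t
    exact (OrderIso.eq_symm_apply _).2 (Fm_am hm t)
  rw [hinv]
  exact OrderIso.continuous _

lemma hasDerivAt_am (hm : m < 1) (t : ℝ) : HasDerivAt (fun t => am t m) (dn t m) t := by
  have hpos : 0 < 1 / jacobiDelta m (am t m) := one_div_pos.2 (jacobiDelta_pos hm _)
  have h := (hasDerivAt_Fm hm (am t m)).of_local_left_inverse
    (continuous_am hm).continuousAt hpos.ne' (Eventually.of_forall (Fm_am hm))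
  rwa [one_div, inv_inv] at h

lemma hasDerivAt_sn (hm : m < 1) (t : ℝ) :
    HasDerivAt (fun t => sn t m) (cn t m * dn t m) t :=
  (hasDerivAt_am hm t).sin

lemma hasDerivAt_cn (hm : m < 1) (t : ℝ) :
    HasDerivAt (fun t => cn t m) (-sn t m * dn t m) t :=
  (hasDerivAt_am hm t).cos

lemma hasDerivAt_dn (hm : m < 1) (t : ℝ) :
    HasDerivAt (fun t => dn t m) (-(m * sn t m * cn t m)) t := by
  refine ((hasDerivAt_jacobiDelta hm (am t m)).comp t (hasDerivAt_am hm t)).congr_deriv ?_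
  exact div_mul_cancel₀ _ (jacobiDelta_pos hm (am t m)).ne'

lemma hasDerivAt_cn_mul_dn (hm : m < 1) (t : ℝ) :
    HasDerivAt (fun t => cn t m * dn t m) (-(1 + m) * sn t m + 2 * m * sn t m ^ 3) t := by
  have hcn : sn t m ^ 2 + cn t m ^ 2 = 1 := sin_sq_add_cos_sq (am t m)
  have hdn : dn t m ^ 2 = 1 - m * sn t m ^ 2 := jacobiDelta_sq hm (am t m)
  refine ((hasDerivAt_cn hm t).fun_mul (hasDerivAt_dn hm t)).congr_deriv ?_
  linear_combination -sn t m * hdn - m * sn t m * hcn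

lemma continuous_sn (hm : m < 1) : Continuous fun t => sn t m :=
  continuous_sin.comp (continuous_am hm)

lemma sn_neg (hm : m < 1) (t : ℝ) : sn (-t) m = -sn t m := by
  obtain ⟨φ, rfl⟩ := surjective_Fm hm t
  rw [← Fm_neg, sn_Fm hm, sn_Fm hm, sin_neg]

lemma periodic_sn (hm : m < 1) : Function.Periodic (fun t => sn t m) (snPeriod m) := fun t => by
  obtain ⟨φ, rfl⟩ := surjective_Fm hm t
  simp only [← Fm_add_two_pi hm, sn_Fm hm, sin_add_two_pi]

-- `sn` takes its maximum `1` at `Fm m (π / 2)`, and next at the translate of that point by the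
-- period.
lemma snPeriod_le_of_periodic_sn (hm : m < 1) {p : ℝ} (hp : 0 < p)
    (h : Function.Periodic (fun t => sn t m) p) : snPeriod m ≤ p := by
  obtain ⟨φ, hφ⟩ := surjective_Fm hm (Fm m (π / 2) + p)
  have hsin : sin φ = 1 := by
    have hmax := h (Fm m (π / 2))
    simpa only [← hφ, sn_Fm hm, sin_pi_div_two] using hmax
  have hlt : π / 2 < φ := (strictMono_Fm hm).lt_iff_lt.1 (by linarith)
  have hle : π / 2 + 2 * π ≤ φ := by
    obtain ⟨k, rfl⟩ := sin_eq_one_iff.1 hsin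
    have hk : (0 : ℝ) < k := by nlinarith [pi_pos]
    have hk' : (1 : ℝ) ≤ k := by exact_mod_cast hk
    nlinarith [pi_pos]
  have hFm := (strictMono_Fm hm).monotone hle
  rw [Fm_add_two_pi hm, hφ] at hFm
  linarith

lemma integral_comp_sn (hm : m < 1) {f : ℝ → ℝ} (hf : Continuous f) :
    ∫ t in (0 : ℝ)..snPeriod m, f (sn t m) =
      ∫ θ in (0 : ℝ)..2 * π, f (sin θ) / jacobiDelta m θ := by
  have h := intervalIntegral.integral_comp_mul_deriv (a := 0) (b := 2 * π)
    (fun θ _ => hasDerivAt_Fm hm θ)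
    (continuous_div_jacobiDelta hm continuous_const).continuousOn (hf.comp (continuous_sn hm))
  simp only [Function.comp_apply, sn_Fm hm, Fm_zero, mul_one_div] at h
  exact h.symm

lemma integral_comp_sin_div_jacobiDelta_div_sub_one (hm : m < 1) (f : ℝ → ℝ) :
    ∫ θ in (0 : ℝ)..2 * π, f (sin θ) / jacobiDelta (m / (m - 1)) θ =
      √(1 - m) * ∫ θ in (0 : ℝ)..2 * π, f (cos θ) / jacobiDelta m θ := by
  have hper : Function.Periodic (fun θ => f (sin θ) / jacobiDelta (m / (m - 1)) θ) (2 * π) :=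
    fun θ => by simp only [jacobiDelta, sin_add_two_pi]
  have hshift := intervalIntegral.integral_comp_add_right (a := 0) (b := 2 * π)
    (fun θ => f (sin θ) / jacobiDelta (m / (m - 1)) θ) (π / 2)
  rw [zero_add, add_comm (2 * π), hper.intervalIntegral_add_eq (π / 2) 0, zero_add] at hshift
  rw [← hshift, ← intervalIntegral.integral_const_mul]
  congr 1 with θ
  rw [jacobiDelta_div_sub_one_add_pi_div_two hm, sin_add_pi_div_two, div_div_eq_mul_div]
  ring

lemma continuousOn_integral_div_jacobiDelta {f : ℝ → ℝ} (hf : Continuous f) (a b : ℝ) :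
    ContinuousOn (fun m => ∫ θ in a..b, f θ / jacobiDelta m θ) (Iio 1) := by
  rw [continuousOn_iff_continuous_domRestrict]
  refine intervalIntegral.continuous_parametric_intervalIntegral_of_continuous'
    (f := fun (m : Iio (1 : ℝ)) θ => f θ / jacobiDelta m θ) ?_ a b
  refine (hf.comp continuous_snd).div ?_ fun p => (jacobiDelta_pos p.1.2 p.2).ne'
  simp only [jacobiDelta]
  fun_prop

-- Near `θ = π / 2` the integrand of `Fm` is at least `1 / (√(1 - m) + (π / 2 - θ))`.
lemma log_le_snPeriod (hm : m < 1) : log (1 + π / 2 / √(1 - m)) ≤ snPeriod m := by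
  set ε := √(1 - m)
  have hε : 0 < ε := sqrt_pos.2 (by linarith)
  have hint := intervalIntegrable_div_jacobiDelta hm (f := fun _ => 1) continuous_const
  calc log (1 + π / 2 / ε) = log ((ε + π / 2) / ε) := by rw [add_div, div_self hε.ne']
    _ = ∫ θ in (0 : ℝ)..π / 2, (ε + π / 2 - θ)⁻¹ := by
      rw [intervalIntegral.integral_comp_sub_left (fun x => x⁻¹), add_sub_cancel_right, sub_zero,
        integral_inv_of_pos hε (by positivity)]
    _ ≤ ∫ θ in (0 : ℝ)..π / 2, 1 / jacobiDelta m θ := by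
      refine intervalIntegral.integral_mono_on pi_div_two_pos.le ?_
        (hint _ _) fun θ hθ => ?_
      · refine ContinuousOn.intervalIntegrable (ContinuousOn.inv₀ (by fun_prop) fun θ hθ => ?_)
        rw [uIcc_of_le pi_div_two_pos.le] at hθ
        linarith [hθ.2]
      · have hcos : |cos θ| ≤ π / 2 - θ := by
          rw [abs_of_nonneg (cos_nonneg_of_mem_Icc ⟨by linarith [hθ.1, pi_pos], hθ.2⟩),
            ← sin_pi_div_two_sub]
          exact sin_le (sub_nonneg.2 hθ.2)
        rw [← one_div]
        exact one_div_le_one_div_of_le (jacobiDelta_pos hm θ)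
          ((jacobiDelta_le hm θ).trans (by linarith))
    _ ≤ snPeriod m :=
      intervalIntegral.integral_mono_interval le_rfl pi_div_two_pos.le (by linarith [pi_pos])
        (Eventually.of_forall fun θ => (one_div_pos.2 (jacobiDelta_pos hm θ)).le)
        (hint _ _)

lemma tendsto_snPeriod_atTop : Tendsto snPeriod (𝓝[<] 1) atTop := by
  have hsqrt : Tendsto (fun m : ℝ => √(1 - m)) (𝓝[<] 1) (𝓝[>] 0) := by
    refine tendsto_nhdsWithin_iff.2 ⟨?_, ?_⟩
    · have hcont : Continuous fun m : ℝ => √(1 - m) := by fun_prop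
      simpa using (hcont.tendsto 1).mono_left nhdsWithin_le_nhds
    · filter_upwards [self_mem_nhdsWithin] with m hm using sqrt_pos.2 (sub_pos.2 hm)
  have hlog : Tendsto (fun m : ℝ => log (1 + π / 2 / √(1 - m))) (𝓝[<] 1) atTop :=
    tendsto_log_atTop.comp (tendsto_atTop_add_const_left _ _
      ((tendsto_inv_nhdsGT_zero.comp hsqrt).const_mul_atTop pi_div_two_pos))
  refine tendsto_atTop_mono' _ ?_ hlog
  filter_upwards [self_mem_nhdsWithin] with m hm using log_le_snPeriod hm

/-- The mean of `sn(·, m)²` over a period. -/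
noncomputable def snSqMean (m : ℝ) : ℝ := (∫ t in (0 : ℝ)..snPeriod m, sn t m ^ 2) / snPeriod m

lemma snSqMean_eq (hm : m < 1) :
    snSqMean m = (∫ θ in (0 : ℝ)..2 * π, sin θ ^ 2 / jacobiDelta m θ) / snPeriod m := by
  rw [snSqMean, integral_comp_sn hm (continuous_pow 2)]

lemma integral_cos_sq_div_jacobiDelta (hm : m < 1) :
    ∫ θ in (0 : ℝ)..2 * π, cos θ ^ 2 / jacobiDelta m θ = snPeriod m * (1 - snSqMean m) := by
  rw [snSqMean_eq hm, mul_sub, mul_div_cancel₀ _ (snPeriod_pos hm).ne', mul_one]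
  simp only [cos_sq', sub_div]
  exact intervalIntegral.integral_sub
    (intervalIntegrable_div_jacobiDelta hm continuous_const _ _)
    (intervalIntegrable_div_jacobiDelta hm (by fun_prop) _ _)

lemma snSqMean_div_sub_one (hm : m < 1) : snSqMean (m / (m - 1)) = 1 - snSqMean m := by
  have hperiod : snPeriod (m / (m - 1)) = √(1 - m) * snPeriod m :=
    integral_comp_sin_div_jacobiDelta_div_sub_one hm fun _ => 1
  have hsqrt : 0 < √(1 - m) := sqrt_pos.2 (by linarith)
  rw [snSqMean_eq (div_sub_one_lt_one hm), hperiod,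
    integral_comp_sin_div_jacobiDelta_div_sub_one hm (· ^ 2), integral_cos_sq_div_jacobiDelta hm,
    mul_div_mul_left _ _ hsqrt.ne', mul_div_cancel_left₀ _ (snPeriod_pos hm).ne']

lemma snSqMean_pos (hm : m < 1) : 0 < snSqMean m := by
  rw [snSqMean_eq hm]
  refine div_pos (intervalIntegral.integral_pos two_pi_pos
    (continuous_div_jacobiDelta hm (by fun_prop)).continuousOn
    (fun θ _ => div_nonneg (sq_nonneg _) (jacobiDelta_pos hm θ).le)
    ⟨π / 2, ⟨pi_div_two_pos.le, by linarith [pi_pos]⟩, ?_⟩) (snPeriod_pos hm)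
  rw [sin_pi_div_two, one_pow]
  exact one_div_pos.2 (jacobiDelta_pos hm _)

lemma snSqMean_lt_one (hm : m < 1) : snSqMean m < 1 := by
  linarith [snSqMean_pos (div_sub_one_lt_one hm), snSqMean_div_sub_one hm]

lemma one_sub_two_pi_div_snPeriod_le_snSqMean (hm : m < 1) :
    1 - 2 * π / snPeriod m ≤ snSqMean m := by
  have hbound : ∫ θ in (0 : ℝ)..2 * π, cos θ ^ 2 / jacobiDelta m θ ≤ ∫ _ in (0 : ℝ)..2 * π, 1 := by
    refine intervalIntegral.integral_mono_on two_pi_pos.le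
      (intervalIntegrable_div_jacobiDelta hm (by fun_prop) _ _)
      (continuous_const.intervalIntegrable _ _) fun θ _ => ?_
    refine (div_le_one (jacobiDelta_pos hm θ)).2 (le_trans ?_ (abs_cos_le_jacobiDelta hm θ))
    nlinarith [sq_abs (cos θ), abs_nonneg (cos θ), abs_cos_le_one θ]
  rw [integral_cos_sq_div_jacobiDelta hm, integral_one, sub_zero,
    ← le_div_iff₀' (snPeriod_pos hm)] at hbound
  linarith

lemma continuousOn_snSqMean : ContinuousOn snSqMean (Iio 1) :=
  ((continuousOn_integral_div_jacobiDelta (continuous_sin.pow 2) 0 (2 * π)).div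
    (continuousOn_integral_div_jacobiDelta continuous_const 0 (2 * π))
    fun _ hm => (snPeriod_pos hm).ne').congr fun _ hm => snSqMean_eq hm

lemma tendsto_snSqMean_nhdsLT_one : Tendsto snSqMean (𝓝[<] 1) (𝓝 1) := by
  have hlower : Tendsto (fun m => 1 - 2 * π / snPeriod m) (𝓝[<] 1) (𝓝 1) := by
    simpa using (tendsto_snPeriod_atTop.const_div_atTop (2 * π)).const_sub 1
  refine tendsto_of_tendsto_of_tendsto_of_le_of_le' hlower tendsto_const_nhds ?_ ?_
  · filter_upwards [self_mem_nhdsWithin] with m hm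
      using one_sub_two_pi_div_snPeriod_le_snSqMean hm
  · filter_upwards [self_mem_nhdsWithin] with m hm using (snSqMean_lt_one hm).le

lemma tendsto_snSqMean_atBot : Tendsto snSqMean atBot (𝓝 0) := by
  have hlim : Tendsto (fun m : ℝ => 1 + (m - 1)⁻¹) atBot (𝓝 1) := by
    simpa [sub_eq_add_neg] using (tendsto_inv_atBot_zero.comp
      (tendsto_atBot_add_const_right atBot (-1 : ℝ) tendsto_id)).const_add 1
  have hcompl : Tendsto (fun m : ℝ => m / (m - 1)) atBot (𝓝[<] 1) := by
    refine tendsto_nhdsWithin_iff.2 ⟨hlim.congr' ?_, ?_⟩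
    · filter_upwards [eventually_lt_atBot 1] with m hm
      field_simp [show m - 1 ≠ 0 by linarith]
      ring
    · filter_upwards [eventually_lt_atBot 1] with m hm using div_sub_one_lt_one hm
  have h := (tendsto_snSqMean_nhdsLT_one.comp hcompl).const_sub 1
  rw [sub_self] at h
  refine h.congr' ?_
  filter_upwards [eventually_lt_atBot 1] with m hm
  simp only [Function.comp_apply, snSqMean_div_sub_one hm, sub_sub_cancel]

lemma continuousOn_mul_one_add_sub_snSqMean (lam : ℝ) :
    ContinuousOn (fun m => lam * (1 + m) - 2 * m * snSqMean m) (Iio 1) :=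
  (by fun_prop : ContinuousOn (fun m : ℝ => lam * (1 + m)) (Iio 1)).sub
    ((by fun_prop : ContinuousOn (fun m : ℝ => 2 * m) (Iio 1)).mul continuousOn_snSqMean)

lemma exists_lt_neg_one_two_mul_snSqMean_eq {lam : ℝ} (hlam : 0 < lam) :
    ∃ m < -1, 2 * m * snSqMean m = lam * (1 + m) := by
  have hpos : 0 < snSqMean (-1) := snSqMean_pos (by norm_num)
  have hslope : Tendsto (fun m => lam - 2 * snSqMean m) atBot (𝓝 lam) := by
    simpa using (tendsto_snSqMean_atBot.const_mul 2).const_sub lam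
  have hbot : Tendsto (fun m => lam * (1 + m) - 2 * m * snSqMean m) atBot atBot := by
    refine (tendsto_atBot_add_const_left _ lam
      (tendsto_id.atBot_mul_pos hlam hslope)).congr fun m => ?_
    simp only [id]
    ring
  obtain ⟨m, hm, hzero⟩ := isPreconnected_Iic.intermediate_value_Iic
    (mem_Iic.2 (le_refl (-1 : ℝ))) (le_principal_iff.2 (Iic_mem_atBot (-1)))
    ((continuousOn_mul_one_add_sub_snSqMean lam).mono (Iic_subset_Iio.2 (by norm_num)))
    hbot (show (0 : ℝ) ≤ _ by linarith)
  refine ⟨m, lt_of_le_of_ne hm ?_, (sub_eq_zero.1 hzero).symm⟩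
  rintro rfl
  linarith

lemma exists_mem_Ioo_two_mul_snSqMean_eq {lam : ℝ} (hlam : lam ∈ Ioo (0 : ℝ) 1) :
    ∃ m ∈ Ioo (0 : ℝ) 1, 2 * m * snSqMean m = lam * (1 + m) := by
  have hid : Tendsto (fun m : ℝ => m) (𝓝[<] 1) (𝓝 1) := nhdsWithin_le_nhds
  have hone : Tendsto (fun m => lam * (1 + m) - 2 * m * snSqMean m) (𝓝[<] 1)
      (𝓝 (lam * (1 + 1) - 2 * 1 * 1)) :=
    ((hid.const_add 1).const_mul lam).sub ((hid.const_mul 2).mul tendsto_snSqMean_nhdsLT_one)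
  obtain ⟨m, hm, hzero⟩ := isPreconnected_Ico.intermediate_value_Ioc
    (left_mem_Ico.2 one_pos) (le_principal_iff.2 (Ico_mem_nhdsLT one_pos))
    ((continuousOn_mul_one_add_sub_snSqMean lam).mono Ico_subset_Iio_self) hone
    (show (0 : ℝ) ∈ _ from ⟨by linarith [hlam.2], by linarith [hlam.1]⟩)
  refine ⟨m, ⟨lt_of_le_of_ne hm.1 ?_, hm.2⟩, (sub_eq_zero.1 hzero).symm⟩
  rintro rfl
  linarith [hlam.1]

end JacobiElliptic

lemma avg_comp_mul {T : ℝ} (hT : T ≠ 0) (f : ℝ → ℝ) :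
    avg (fun t => f (T / (2 * π) * t)) = (∫ t in (0 : ℝ)..T, f t) / T := by
  have hpi := two_pi_pos.ne'
  rw [avg, intervalIntegral.integral_comp_mul_left _ (div_ne_zero hT hpi), mul_zero,
    div_mul_cancel₀ _ hpi, smul_eq_mul]
  field_simp

section SnWave

variable {V m : ℝ}

/-- The angular frequency `4K(m) / 2π` at which `t ↦ sn(Ω t, m)` has period `2π`. -/
noncomputable def snFreq (m : ℝ) : ℝ := snPeriod m / (2 * π)

/-- The elliptic sine wave `V sn(Ω t, m)`, with `Ω` chosen so that its period is `2π`. -/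
noncomputable def snWave (V m t : ℝ) : ℝ := V * sn (snFreq m * t) m

lemma snFreq_pos (hm : m < 1) : 0 < snFreq m := div_pos (snPeriod_pos hm) two_pi_pos

lemma snFreq_mul_two_pi (m : ℝ) : snFreq m * (2 * π) = snPeriod m :=
  div_mul_cancel₀ _ two_pi_pos.ne'

lemma snWave_neg (hm : m < 1) (V t : ℝ) : snWave V m (-t) = -snWave V m t := by
  simp only [snWave, mul_neg, sn_neg hm]

lemma periodic_snWave (hm : m < 1) (V : ℝ) : Function.Periodic (snWave V m) (2 * π) := fun t => by
  rw [snWave, mul_add, snFreq_mul_two_pi]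
  exact congrArg (V * ·) (periodic_sn hm (snFreq m * t))

lemma two_pi_le_of_periodic_snWave (hm : m < 1) (hV : V ≠ 0) {p : ℝ} (hp : 0 < p)
    (h : Function.Periodic (snWave V m) p) : 2 * π ≤ p := by
  have hΩ := snFreq_pos hm
  refine le_of_mul_le_mul_left ?_ hΩ
  rw [snFreq_mul_two_pi]
  refine snPeriod_le_of_periodic_sn hm (mul_pos hΩ hp) fun t => ?_
  have hshift := mul_left_cancel₀ hV (h (t / snFreq m))
  simpa only [mul_add, mul_div_cancel₀ _ hΩ.ne'] using hshift

lemma deriv_deriv_snWave (hm : m < 1) (V t : ℝ) :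
    deriv (deriv (snWave V m)) t =
      V * snFreq m ^ 2 * (-(1 + m) * sn (snFreq m * t) m + 2 * m * sn (snFreq m * t) m ^ 3) := by
  set Ω := snFreq m
  have hlin (t : ℝ) : HasDerivAt (fun t => Ω * t) Ω t := hasDerivAt_const_mul Ω
  have hderiv : deriv (snWave V m) = fun t => V * (cn (Ω * t) m * dn (Ω * t) m * Ω) := by
    funext t
    exact (((hasDerivAt_sn hm (Ω * t)).comp t (hlin t)).const_mul V).deriv
  rw [hderiv]
  exact ((((hasDerivAt_cn_mul_dn hm (Ω * t)).comp t (hlin t)).mul_const Ω).const_mul V).deriv.trans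
    (by ring)

lemma avg_snWave_sq (hm : m < 1) (V : ℝ) :
    avg (fun t => snWave V m t ^ 2) = V ^ 2 * snSqMean m := by
  have h := avg_comp_mul (snPeriod_pos hm).ne' fun t => (V * sn t m) ^ 2
  simp only [mul_pow, intervalIntegral.integral_const_mul, mul_div_assoc] at h
  simp only [snWave, mul_pow]
  exact h

lemma snWave_equation {α β : ℝ} (hm : m < 1) (hβ : β ≠ 0)
    (hmean : 2 * m * (α * snSqMean m) = β * (1 + m)) (hV : β * V ^ 2 = 2 * m * snFreq m ^ 2)
    (t : ℝ) :
    deriv (deriv (snWave V m)) t + α * avg (fun s => snWave V m s ^ 2) * snWave V m t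
      - β * snWave V m t ^ 3 = 0 := by
  have hlinear : α * (V ^ 2 * snSqMean m) = (1 + m) * snFreq m ^ 2 := by
    refine mul_left_cancel₀ hβ ?_
    linear_combination α * snSqMean m * hV + snFreq m ^ 2 * hmean
  rw [deriv_deriv_snWave hm, avg_snWave_sq hm, hlinear, snWave]
  linear_combination -V * sn (snFreq m * t) m ^ 3 * hV

lemma exists_snWave_equation {α β : ℝ} (hm : m < 1) (hmβ : 0 < m * β)
    (hmean : 2 * m * (α * snSqMean m) = β * (1 + m)) :
    ∃ V > 0, ∀ t, deriv (deriv (snWave V m)) t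
      + α * avg (fun s => snWave V m s ^ 2) * snWave V m t - β * snWave V m t ^ 3 = 0 := by
  have hβ : β ≠ 0 := right_ne_zero_of_mul hmβ.ne'
  have hVsq : 0 < 2 * (m * β) * (snFreq m / β) ^ 2 :=
    mul_pos (mul_pos two_pos hmβ) (sq_pos_of_ne_zero (div_ne_zero (snFreq_pos hm).ne' hβ))
  refine ⟨_, sqrt_pos.2 hVsq, snWave_equation hm hβ hmean ?_⟩
  rw [sq_sqrt hVsq.le]
  field_simp

end SnWave

theorem stmt_13 :
    -- (i)  case s* = −1
    (∀ lam : ℝ, 0 < lam →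
      ∃ V Ω m : ℝ, 0 < V ∧ 0 < Ω ∧ m < -1 ∧
        (∀ t : ℝ, (fun t => V * sn (Ω * t) m) (-t) = -(fun t => V * sn (Ω * t) m) t) ∧
        Function.Periodic (fun t => V * sn (Ω * t) m) (2 * π) ∧
        (∀ p : ℝ, 0 < p → Function.Periodic (fun t => V * sn (Ω * t) m) p → 2 * π ≤ p) ∧
        (∀ t : ℝ, deriv (deriv (fun t => V * sn (Ω * t) m)) t
            - avg (fun s => (V * sn (Ω * s) m) ^ 2) * (V * sn (Ω * t) m)
            + lam * (V * sn (Ω * t) m) ^ 3 = 0)) ∧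
    -- (ii)  case s* = 1
    (∀ lam : ℝ, lam ∈ Set.Ioo (0 : ℝ) 1 →
      ∃ V Ω m : ℝ, 0 < V ∧ 0 < Ω ∧ m ∈ Set.Ioo (0 : ℝ) 1 ∧
        (∀ t : ℝ, (fun t => V * sn (Ω * t) m) (-t) = -(fun t => V * sn (Ω * t) m) t) ∧
        Function.Periodic (fun t => V * sn (Ω * t) m) (2 * π) ∧
        (∀ p : ℝ, 0 < p → Function.Periodic (fun t => V * sn (Ω * t) m) p → 2 * π ≤ p) ∧
        (∀ t : ℝ, deriv (deriv (fun t => V * sn (Ω * t) m)) t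
            + avg (fun s => (V * sn (Ω * s) m) ^ 2) * (V * sn (Ω * t) m)
            - lam * (V * sn (Ω * t) m) ^ 3 = 0)) := by
  refine ⟨fun lam hlam => ?_, fun lam hlam => ?_⟩
  · obtain ⟨m, hm, hmean⟩ := exists_lt_neg_one_two_mul_snSqMean_eq hlam
    have hm₁ : m < 1 := by linarith
    obtain ⟨V, hV, heq⟩ := exists_snWave_equation (α := -1) (β := -lam) hm₁
      (by nlinarith) (by linear_combination -hmean)
    refine ⟨V, snFreq m, m, hV, snFreq_pos hm₁, hm, snWave_neg hm₁ V, periodic_snWave hm₁ V,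
      fun p hp => two_pi_le_of_periodic_snWave hm₁ hV.ne' hp, fun t => ?_⟩
    unfold snWave at heq
    linear_combination heq t
  · obtain ⟨m, hm, hmean⟩ := exists_mem_Ioo_two_mul_snSqMean_eq hlam
    obtain ⟨V, hV, heq⟩ := exists_snWave_equation (α := 1) (β := lam) hm.2
      (mul_pos hm.1 hlam.1) (by linear_combination hmean)
    refine ⟨V, snFreq m, m, hV, snFreq_pos hm.2, hm, snWave_neg hm.2 V, periodic_snWave hm.2 V,
      fun p hp => two_pi_le_of_periodic_snWave hm.2 hV.ne' hp, fun t => ?_⟩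
    unfold snWave at heq
    linear_combination heq t
end

section
/- (i) For every λ > 0 there exists a unique m ∈ (−∞, −1) such that 2(K(m) − E(m)) = λ (1 + m) K(m). (ii) For every λ ∈ (0, 1) there exists a unique m ∈ (0, 1) such that 2(K(m) − E(m)) = λ (1 + m) K(m). Equivalently, the function m ↦ 2(K(m) − E(m))/((1 + m)K(m)) is a bijection from (−∞, −1) onto (0, +∞) and from (0, 1) onto (0, 1). -/
open Real

/-- Complete elliptic integral of the first kind (parameter `m`). -/
noncomputable def Kc (m : ℝ) : ℝ := ∫ θ in (0:ℝ)..(π / 2), 1 / Real.sqrt (1 - m * Real.sin θ ^ 2)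

/-- Complete elliptic integral of the second kind (parameter `m`). -/
noncomputable def Ec (m : ℝ) : ℝ := ∫ θ in (0:ℝ)..(π / 2), Real.sqrt (1 - m * Real.sin θ ^ 2)

/-!
Write `σ(p, q)` for the mean of `sin²` on `[0, π / 2]` with respect to the weight
`1 / √(p cos² + q sin²)`. Since `K(m) - E(m) = m ∫ sin² / √(1 - m sin²)` and
`1 - m sin² = cos² + (1 - m) sin²`, the function in question is
`(2 - 2 / (1 + m)) * σ(1, 1 - m)`. Its first factor is strictly increasing on each side of `-1`, and
`σ(1, 1 - m)` is increasing in `m` because the ratio of the weights belonging to two values of `m`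
is a monotone function of `sin²` (Chebyshev's integral inequality).

The reflection `θ ↦ π / 2 - θ` gives `σ(p, q) + σ(q, p) = 1`, so the single estimate
`σ(p, q) ≤ 1 / log (1 + √(q / p) π / 2)` provides both the limit `0` as `m → -∞` and the limit `1`
as `m → 1`.
-/

open MeasureTheory Set Filter Topology

theorem integral_mul_mul_integral_le_of_ratio_mono {α : Type*} [MeasurableSpace α] {μ : Measure α}
    [SFinite μ] {f u v : α → ℝ} (hu : Integrable u μ) (hv : Integrable v μ)
    (hfu : Integrable (fun x => f x * u x) μ) (hfv : Integrable (fun x => f x * v x) μ)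
    (h : ∀ x y, f x ≤ f y → v x * u y ≤ u x * v y) :
    (∫ x, f x * u x ∂μ) * ∫ x, v x ∂μ ≤ (∫ x, u x ∂μ) * ∫ x, f x * v x ∂μ := by
  have hnonneg : 0 ≤ ∫ z : α × α, (f z.2 - f z.1) * (u z.1 * v z.2 - v z.1 * u z.2) ∂μ.prod μ := by
    refine integral_nonneg fun ⟨x, y⟩ => ?_
    rcases le_total (f x) (f y) with hxy | hyx
    · exact mul_nonneg (sub_nonneg.2 hxy) (sub_nonneg.2 (h x y hxy))
    · refine mul_nonneg_of_nonpos_of_nonpos (sub_nonpos.2 hyx) (sub_nonpos.2 ?_)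
      linarith [h y x hyx]
  have hexpand : ∀ z : α × α, (f z.2 - f z.1) * (u z.1 * v z.2 - v z.1 * u z.2) =
      u z.1 * (f z.2 * v z.2) - v z.1 * (f z.2 * u z.2)
        - ((f z.1 * u z.1) * v z.2 - (f z.1 * v z.1) * u z.2) := fun z => by ring
  simp_rw [hexpand] at hnonneg
  rw [integral_sub ((hu.mul_prod hfv).sub' (hv.mul_prod hfu))
      ((hfu.mul_prod hv).sub' (hfv.mul_prod hu)),
    integral_sub (hu.mul_prod hfv) (hv.mul_prod hfu),
    integral_sub (hfu.mul_prod hv) (hfv.mul_prod hu)] at hnonneg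
  rw [integral_prod_mul u fun y => f y * v y, integral_prod_mul v fun y => f y * u y,
    integral_prod_mul (fun x => f x * u x) v, integral_prod_mul (fun x => f x * v x) u] at hnonneg
  linarith

lemma integral_inv_add_mul {a b c : ℝ} (ha : 0 < a) (hb : 0 < b) (hc : 0 ≤ c) :
    ∫ θ in (0:ℝ)..c, (a + b * θ)⁻¹ = b⁻¹ * log (1 + b / a * c) := by
  rw [intervalIntegral.integral_comp_add_mul (fun x : ℝ => x⁻¹) hb.ne', mul_zero, add_zero,
    integral_inv_of_pos ha (by positivity), smul_eq_mul, add_div, div_self ha.ne',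
    div_mul_eq_mul_div]

section agm

/-- The integrand of Gauss's integral for the arithmetic-geometric mean, as a function of the
squares `p`, `q` of the two numbers. At `(p, q) = (1, 1 - m)` it is the integrand of `K(m)`. -/
noncomputable def agmWeight (p q θ : ℝ) : ℝ := (√(p * cos θ ^ 2 + q * sin θ ^ 2))⁻¹

/-- Gauss's integral for the arithmetic-geometric mean of `√p` and `√q`. -/
noncomputable def agmIntegral (p q : ℝ) : ℝ := ∫ θ in (0:ℝ)..(π / 2), agmWeight p q θ

/-- The integral of `sin²` against `agmWeight p q`. At `(p, q) = (1, 1 - m)` it is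
`(K(m) - E(m)) / m`. -/
noncomputable def sinSqMoment (p q : ℝ) : ℝ := ∫ θ in (0:ℝ)..(π / 2), sin θ ^ 2 * agmWeight p q θ

/-- The mean of `sin²` on `[0, π / 2]` with respect to the weight `agmWeight p q`. -/
noncomputable def sinSqMean (p q : ℝ) : ℝ := sinSqMoment p q / agmIntegral p q

variable {p q : ℝ}

lemma mul_cos_sq_add_mul_sin_sq_pos (hp : 0 < p) (hq : 0 < q) (θ : ℝ) :
    0 < p * cos θ ^ 2 + q * sin θ ^ 2 := by
  rcases eq_or_ne (sin θ) 0 with hs | hs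
  · rw [cos_sq', hs]
    simpa using hp
  · positivity

lemma agmWeight_pos (hp : 0 < p) (hq : 0 < q) (θ : ℝ) : 0 < agmWeight p q θ :=
  inv_pos.2 (sqrt_pos.2 (mul_cos_sq_add_mul_sin_sq_pos hp hq θ))

lemma agmWeight_pi_div_two_sub (p q θ : ℝ) : agmWeight p q (π / 2 - θ) = agmWeight q p θ := by
  rw [agmWeight, agmWeight, cos_pi_div_two_sub, sin_pi_div_two_sub, add_comm]

lemma continuous_agmWeight (hp : 0 < p) (hq : 0 < q) : Continuous (agmWeight p q) :=
  Continuous.inv₀ (by fun_prop) fun θ => (sqrt_pos.2 (mul_cos_sq_add_mul_sin_sq_pos hp hq θ)).ne'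

lemma continuous_sin_sq_mul_agmWeight (hp : 0 < p) (hq : 0 < q) :
    Continuous fun θ => sin θ ^ 2 * agmWeight p q θ :=
  (continuous_sin.pow 2).mul (continuous_agmWeight hp hq)

lemma continuousOn_integral_mul_agmWeight {g : ℝ → ℝ} (hg : Continuous g) (hp : 0 < p) (a b : ℝ) :
    ContinuousOn (fun q => ∫ θ in a..b, g θ * agmWeight p q θ) (Ioi 0) := by
  rw [continuousOn_iff_continuous_domRestrict]
  refine intervalIntegral.continuous_parametric_intervalIntegral_of_continuous'
    (f := fun (q : Ioi (0:ℝ)) θ => g θ * agmWeight p q θ) ?_ a b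
  refine Continuous.mul (by fun_prop) (Continuous.inv₀ (by fun_prop) fun z => ?_)
  exact (sqrt_pos.2 (mul_cos_sq_add_mul_sin_sq_pos hp z.1.2 z.2)).ne'

lemma agmIntegral_pos (hp : 0 < p) (hq : 0 < q) : 0 < agmIntegral p q :=
  intervalIntegral.intervalIntegral_pos_of_pos
    ((continuous_agmWeight hp hq).intervalIntegrable _ _) (agmWeight_pos hp hq) pi_div_two_pos

lemma sinSqMoment_pos (hp : 0 < p) (hq : 0 < q) : 0 < sinSqMoment p q := by
  refine intervalIntegral.intervalIntegral_pos_of_pos_on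
    ((continuous_sin_sq_mul_agmWeight hp hq).intervalIntegrable _ _) (fun θ hθ => ?_) pi_div_two_pos
  have hsin : 0 < sin θ := sin_pos_of_pos_of_lt_pi hθ.1 (by linarith [hθ.2, pi_pos])
  exact mul_pos (by positivity) (agmWeight_pos hp hq θ)

lemma agmIntegral_comm (p q : ℝ) : agmIntegral p q = agmIntegral q p := by
  have h := intervalIntegral.integral_comp_sub_left (a := 0) (b := π / 2) (agmWeight p q) (π / 2)
  simp only [agmWeight_pi_div_two_sub, sub_zero, sub_self] at h
  exact h.symm

lemma sinSqMoment_swap (hp : 0 < p) (hq : 0 < q) :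
    sinSqMoment q p = agmIntegral p q - sinSqMoment p q := by
  have h := intervalIntegral.integral_comp_sub_left (a := 0) (b := π / 2)
    (fun θ => sin θ ^ 2 * agmWeight q p θ) (π / 2)
  simp only [agmWeight_pi_div_two_sub, sin_pi_div_two_sub, sub_zero, sub_self] at h
  rw [sinSqMoment, ← h, agmIntegral, sinSqMoment, ← intervalIntegral.integral_sub
    ((continuous_agmWeight hp hq).intervalIntegrable _ _)
    ((continuous_sin_sq_mul_agmWeight hp hq).intervalIntegrable _ _)]
  simp only [cos_sq', sub_mul, one_mul]

lemma sinSqMoment_le_inv_sqrt (hp : 0 < p) (hq : 0 < q) : sinSqMoment p q ≤ (√q)⁻¹ := by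
  have hle : ∀ θ ∈ Ioo 0 (π / 2), sin θ ^ 2 * agmWeight p q θ ≤ sin θ * (√q)⁻¹ := fun θ hθ => by
    have hsin : 0 < sin θ := sin_pos_of_pos_of_lt_pi hθ.1 (by linarith [hθ.2, pi_pos])
    have hweight : agmWeight p q θ ≤ (√q * sin θ)⁻¹ := by
      refine inv_anti₀ (by positivity) (le_sqrt_of_sq_le ?_)
      rw [mul_pow, sq_sqrt hq.le]
      exact le_add_of_nonneg_left (by positivity)
    calc sin θ ^ 2 * agmWeight p q θ ≤ sin θ ^ 2 * (√q * sin θ)⁻¹ := by gcongr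
      _ = sin θ * (√q)⁻¹ := by field_simp
  have h := intervalIntegral.integral_mono_on_of_le_Ioo (μ := volume) pi_div_two_pos.le
    ((continuous_sin_sq_mul_agmWeight hp hq).intervalIntegrable _ _)
    (Continuous.intervalIntegrable (by fun_prop) _ _) hle
  simp only [intervalIntegral.integral_mul_const, integral_sin, cos_zero, cos_pi_div_two,
    sub_zero, one_mul] at h
  exact h

lemma inv_sqrt_mul_log_le_agmIntegral (hp : 0 < p) (hq : 0 < q) :
    (√q)⁻¹ * log (1 + √q / √p * (π / 2)) ≤ agmIntegral p q := by
  have hle : ∀ θ ∈ Icc 0 (π / 2), (√p + √q * θ)⁻¹ ≤ agmWeight p q θ := fun θ hθ => by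
    have hθ0 := hθ.1
    refine inv_anti₀ (sqrt_pos.2 (mul_cos_sq_add_mul_sin_sq_pos hp hq θ))
      ((sqrt_le_left (by positivity)).2 ?_)
    calc p * cos θ ^ 2 + q * sin θ ^ 2 ≤ p * 1 + q * θ ^ 2 := by
          linarith [mul_le_mul_of_nonneg_left (cos_sq_le_one θ) hp.le,
            mul_le_mul_of_nonneg_left (sin_sq_le_sq (x := θ)) hq.le]
      _ ≤ p * 1 + q * θ ^ 2 + 2 * (√p * √q * θ) := le_add_of_nonneg_right (by positivity)
      _ = (√p + √q * θ) ^ 2 := by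
          rw [add_sq, mul_pow, sq_sqrt hp.le, sq_sqrt hq.le]
          ring
  rw [← integral_inv_add_mul (sqrt_pos.2 hp) (sqrt_pos.2 hq) pi_div_two_pos.le]
  refine intervalIntegral.integral_mono_on pi_div_two_pos.le (ContinuousOn.intervalIntegrable ?_)
    ((continuous_agmWeight hp hq).intervalIntegrable _ _) hle
  refine ContinuousOn.inv₀ (by fun_prop) fun θ hθ => ?_
  rw [uIcc_of_le pi_div_two_pos.le] at hθ
  have hθ0 := hθ.1
  positivity

lemma sinSqMean_pos (hp : 0 < p) (hq : 0 < q) : 0 < sinSqMean p q :=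
  div_pos (sinSqMoment_pos hp hq) (agmIntegral_pos hp hq)

lemma sinSqMean_swap (hp : 0 < p) (hq : 0 < q) : sinSqMean q p = 1 - sinSqMean p q := by
  rw [sinSqMean, sinSqMean, sinSqMoment_swap hp hq, agmIntegral_comm q p, sub_div,
    div_self (agmIntegral_pos hp hq).ne']

lemma sinSqMean_lt_one (hp : 0 < p) (hq : 0 < q) : sinSqMean p q < 1 := by
  linarith [sinSqMean_swap hp hq, sinSqMean_pos hq hp]

lemma sinSqMean_le_inv_log (hp : 0 < p) (hq : 0 < q) :
    sinSqMean p q ≤ (log (1 + √q / √p * (π / 2)))⁻¹ := by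
  have hlog : 0 < log (1 + √q / √p * (π / 2)) := log_pos (lt_add_of_pos_right 1 (by positivity))
  calc sinSqMean p q ≤ (√q)⁻¹ / ((√q)⁻¹ * log (1 + √q / √p * (π / 2))) :=
        div_le_div₀ (by positivity) (sinSqMoment_le_inv_sqrt hp hq) (by positivity)
          (inv_sqrt_mul_log_le_agmIntegral hp hq)
    _ = (log (1 + √q / √p * (π / 2)))⁻¹ := by field_simp

lemma tendsto_sinSqMean_of_div_atTop {α : Type*} {l : Filter α} {p q : α → ℝ}
    (hp : ∀ᶠ x in l, 0 < p x) (hq : ∀ᶠ x in l, 0 < q x)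
    (h : Tendsto (fun x => q x / p x) l atTop) :
    Tendsto (fun x => sinSqMean (p x) (q x)) l (𝓝 0) := by
  have hlog : Tendsto (fun x => log (1 + √(q x / p x) * (π / 2))) l atTop :=
    tendsto_log_atTop.comp <| tendsto_atTop_add_const_left _ _ <|
      (tendsto_sqrt_atTop.comp h).atTop_mul_const pi_div_two_pos
  refine tendsto_of_tendsto_of_tendsto_of_le_of_le' tendsto_const_nhds hlog.inv_tendsto_atTop ?_ ?_
  · filter_upwards [hp, hq] with x hpx hqx using (sinSqMean_pos hpx hqx).le
  · filter_upwards [hp, hq] with x hpx hqx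
    rw [Pi.inv_apply, sqrt_div hqx.le]
    exact sinSqMean_le_inv_log hpx hqx

lemma continuousOn_sinSqMean (hp : 0 < p) : ContinuousOn (sinSqMean p) (Ioi 0) := by
  have hintegral : ContinuousOn (agmIntegral p) (Ioi 0) := by
    have h := continuousOn_integral_mul_agmWeight (continuous_const (y := (1:ℝ))) hp 0 (π / 2)
    simp only [one_mul] at h
    exact h
  exact (continuousOn_integral_mul_agmWeight (continuous_sin.pow 2) hp _ _).div hintegral
    fun q hq => (agmIntegral_pos hp hq).ne'

lemma agmWeight_mul_le_agmWeight_mul {r x y : ℝ} (hp : 0 < p) (hq : 0 < q) (hqr : q ≤ r)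
    (hxy : sin x ^ 2 ≤ sin y ^ 2) :
    agmWeight p q x * agmWeight p r y ≤ agmWeight p r x * agmWeight p q y := by
  have hr : 0 < r := hq.trans_le hqr
  have hqx := mul_cos_sq_add_mul_sin_sq_pos hp hq x
  have hrx := mul_cos_sq_add_mul_sin_sq_pos hp hr x
  have hqy := mul_cos_sq_add_mul_sin_sq_pos hp hq y
  simp only [agmWeight, ← mul_inv]
  rw [← sqrt_mul hqx.le, ← sqrt_mul hrx.le]
  refine inv_anti₀ (sqrt_pos.2 (mul_pos hrx hqy)) (sqrt_le_sqrt ?_)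
  rw [cos_sq' x, cos_sq' y]
  nlinarith [mul_nonneg (mul_nonneg hp.le (sub_nonneg.2 hqr)) (sub_nonneg.2 hxy)]

lemma antitoneOn_sinSqMean (hp : 0 < p) : AntitoneOn (sinSqMean p) (Ioi 0) := by
  intro q hq r hr hqr
  have integrableOn {g : ℝ → ℝ} (hg : Continuous g) : IntegrableOn g (Ioc 0 (π / 2)) :=
    (hg.integrableOn_Icc (a := 0) (b := π / 2)).mono_set Ioc_subset_Icc_self
  have hchebyshev := integral_mul_mul_integral_le_of_ratio_mono (f := fun θ => sin θ ^ 2)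
    (integrableOn (continuous_agmWeight hp hr)) (integrableOn (continuous_agmWeight hp hq))
    (integrableOn (continuous_sin_sq_mul_agmWeight hp hr))
    (integrableOn (continuous_sin_sq_mul_agmWeight hp hq))
    fun x y hxy => agmWeight_mul_le_agmWeight_mul hp hq hqr hxy
  simp only [← intervalIntegral.integral_of_le pi_div_two_pos.le] at hchebyshev
  rw [sinSqMean, sinSqMean, div_le_div_iff₀ (agmIntegral_pos hp hr) (agmIntegral_pos hp hq)]
  exact hchebyshev.trans_eq (mul_comm _ _)

end agm

section elliptic

/-- The function `m ↦ 2(K(m) - E(m)) / ((1 + m)K(m))`; by the convention for division by zero its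
value at `m = -1` is `0`. -/
noncomputable def ellipticRatio (m : ℝ) : ℝ := 2 * (Kc m - Ec m) / ((1 + m) * Kc m)

variable {m : ℝ}

lemma agmWeight_one_one_sub (m θ : ℝ) :
    agmWeight 1 (1 - m) θ = (√(1 - m * sin θ ^ 2))⁻¹ := by
  rw [agmWeight, cos_sq']
  ring_nf

lemma Kc_eq_agmIntegral (m : ℝ) : Kc m = agmIntegral 1 (1 - m) := by
  simp only [Kc, agmIntegral, agmWeight_one_one_sub, one_div]

lemma Kc_pos (hm : m < 1) : 0 < Kc m :=
  Kc_eq_agmIntegral m ▸ agmIntegral_pos one_pos (sub_pos.2 hm)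

lemma Kc_sub_Ec (hm : m < 1) : Kc m - Ec m = m * sinSqMoment 1 (1 - m) := by
  have hq : 0 < 1 - m := sub_pos.2 hm
  rw [Kc_eq_agmIntegral, agmIntegral, Ec, sinSqMoment, ← intervalIntegral.integral_const_mul,
    ← intervalIntegral.integral_sub ((continuous_agmWeight one_pos hq).intervalIntegrable _ _)
      (Continuous.intervalIntegrable (by fun_prop) _ _)]
  refine intervalIntegral.integral_congr fun θ _ => ?_
  have hsqrt : 0 < √(1 - m * sin θ ^ 2) :=
    inv_pos.1 (agmWeight_one_one_sub m θ ▸ agmWeight_pos one_pos hq θ)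
  simp only [agmWeight_one_one_sub]
  field_simp
  rw [sq_sqrt (sqrt_pos.1 hsqrt).le]
  ring

lemma ellipticRatio_eq (hm : m < 1) (hm' : 1 + m ≠ 0) :
    ellipticRatio m = (2 - 2 / (1 + m)) * sinSqMean 1 (1 - m) := by
  have hK : agmIntegral 1 (1 - m) ≠ 0 := (agmIntegral_pos one_pos (sub_pos.2 hm)).ne'
  rw [ellipticRatio, Kc_sub_Ec hm, Kc_eq_agmIntegral, sinSqMean]
  field_simp
  ring

lemma ellipticRatio_eq_iff {y : ℝ} (hm : m < 1) (hm' : 1 + m ≠ 0) :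
    ellipticRatio m = y ↔ 2 * (Kc m - Ec m) = y * (1 + m) * Kc m := by
  rw [ellipticRatio, div_eq_iff (mul_ne_zero hm' (Kc_pos hm).ne'), mul_assoc]

lemma continuousAt_sinSqMean_one_one_sub (hm : m < 1) :
    ContinuousAt (fun m => sinSqMean 1 (1 - m)) m :=
  ((continuousOn_sinSqMean one_pos).continuousAt (Ioi_mem_nhds (sub_pos.2 hm))).comp'
    (f := fun m => 1 - m) (by fun_prop)

lemma continuousAt_ellipticRatio (hm : m < 1) (hm' : 1 + m ≠ 0) : ContinuousAt ellipticRatio m := by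
  have hfactor : ContinuousAt (fun m : ℝ => 2 - 2 / (1 + m)) m := by fun_prop (disch := exact hm')
  refine (hfactor.mul (continuousAt_sinSqMean_one_one_sub hm)).congr ?_
  have hne : ∀ᶠ x in 𝓝 m, 1 + x ≠ 0 := (by fun_prop : ContinuousAt (1 + ·) m).eventually_ne hm'
  filter_upwards [Iio_mem_nhds hm, hne] with x hx hx' using (ellipticRatio_eq hx hx').symm

lemma two_sub_two_div_one_add_pos (hm : m < -1 ∨ 0 < m) : 0 < 2 - 2 / (1 + m) := by
  rw [sub_pos]
  rcases hm with hm | hm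
  · exact (div_neg_of_pos_of_neg two_pos (by linarith)).trans two_pos
  · exact div_lt_self two_pos (by linarith)

lemma ellipticRatio_pos (hm : m < 1) (hm' : m < -1 ∨ 0 < m) : 0 < ellipticRatio m := by
  rw [ellipticRatio_eq hm (by rcases hm' with h | h <;> linarith)]
  exact mul_pos (two_sub_two_div_one_add_pos hm') (sinSqMean_pos one_pos (sub_pos.2 hm))

lemma ellipticRatio_lt_one (hm0 : 0 < m) (hm1 : m < 1) : ellipticRatio m < 1 := by
  have hfactor : 2 - 2 / (1 + m) ≤ 1 := by
    have : 1 ≤ 2 / (1 + m) := (one_le_div (by linarith)).2 (by linarith)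
    linarith
  rw [ellipticRatio_eq hm1 (by linarith)]
  exact mul_lt_one_of_nonneg_of_lt_one_right hfactor (sinSqMean_pos one_pos (sub_pos.2 hm1)).le
    (sinSqMean_lt_one one_pos (sub_pos.2 hm1))

lemma ellipticRatio_lt_ellipticRatio {n : ℝ} (hmn : m < n) (hn1 : n < 1)
    (hsame : 0 < (1 + m) * (1 + n)) (hn : n < -1 ∨ 0 < n) : ellipticRatio m < ellipticRatio n := by
  have hm0 : 1 + m ≠ 0 := left_ne_zero_of_mul hsame.ne'
  have hn0 : 1 + n ≠ 0 := right_ne_zero_of_mul hsame.ne'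
  have hm1 : m < 1 := hmn.trans hn1
  have hfactor : 2 - 2 / (1 + m) < 2 - 2 / (1 + n) := by
    have hdiff : 2 / (1 + m) - 2 / (1 + n) = 2 * (n - m) / ((1 + m) * (1 + n)) := by
      field_simp
      ring
    have : 0 < 2 * (n - m) / ((1 + m) * (1 + n)) := div_pos (by linarith) hsame
    linarith
  rw [ellipticRatio_eq hm1 hm0, ellipticRatio_eq hn1 hn0]
  exact mul_lt_mul hfactor
    (antitoneOn_sinSqMean one_pos (sub_pos.2 hn1) (sub_pos.2 hm1) (by linarith))
    (sinSqMean_pos one_pos (sub_pos.2 hm1)) (two_sub_two_div_one_add_pos hn).le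

lemma tendsto_ellipticRatio_atBot : Tendsto ellipticRatio atBot (𝓝 0) := by
  have hfactor : Tendsto (fun m : ℝ => 2 - 2 / (1 + m)) atBot (𝓝 (2 - 0)) :=
    tendsto_const_nhds.sub ((tendsto_atBot_add_const_left _ 1 tendsto_id).const_div_atBot 2)
  have hmean : Tendsto (fun m => sinSqMean 1 (1 - m)) atBot (𝓝 0) := by
    refine tendsto_sinSqMean_of_div_atTop (Eventually.of_forall fun _ => one_pos) ?_ ?_
    · filter_upwards [Iio_mem_atBot 1] with m hm using sub_pos.2 hm
    · simpa only [div_one, sub_eq_add_neg] using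
        tendsto_atTop_add_const_left _ 1 tendsto_neg_atBot_atTop
  have hprod := hfactor.mul hmean
  rw [mul_zero] at hprod
  refine hprod.congr' ?_
  filter_upwards [Iio_mem_atBot (-1)] with m hm
  rw [mem_Iio] at hm
  exact (ellipticRatio_eq (by linarith) (by linarith)).symm

lemma tendsto_ellipticRatio_nhdsLT_neg_one : Tendsto ellipticRatio (𝓝[<] (-1)) atTop := by
  have hden : Tendsto (fun m : ℝ => 1 + m) (𝓝[<] (-1)) (𝓝[<] 0) := by
    refine tendsto_nhdsWithin_iff.2 ⟨?_, ?_⟩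
    · exact (Continuous.tendsto' (by fun_prop) (-1) 0 (by norm_num)).mono_left nhdsWithin_le_nhds
    · filter_upwards [self_mem_nhdsWithin] with m hm
      rw [mem_Iio] at hm ⊢
      linarith
  have hfactor : Tendsto (fun m : ℝ => 2 - 2 / (1 + m)) (𝓝[<] (-1)) atTop := by
    simp only [sub_eq_add_neg, div_eq_mul_inv]
    exact tendsto_atTop_add_const_left _ 2 <|
      tendsto_neg_atBot_atTop.comp (hden.inv_tendsto_nhdsLT_zero.const_mul_atBot two_pos)
  have hmean : Tendsto (fun m => sinSqMean 1 (1 - m)) (𝓝[<] (-1)) (𝓝 (sinSqMean 1 (1 - -1))) :=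
    (continuousAt_sinSqMean_one_one_sub (by norm_num)).tendsto.mono_left nhdsWithin_le_nhds
  refine (hfactor.atTop_mul_pos (sinSqMean_pos one_pos (by norm_num)) hmean).congr' ?_
  filter_upwards [self_mem_nhdsWithin] with m hm
  rw [mem_Iio] at hm
  exact (ellipticRatio_eq (by linarith) (by linarith)).symm

lemma tendsto_ellipticRatio_nhds_zero : Tendsto ellipticRatio (𝓝 0) (𝓝 0) := by
  have hzero : ellipticRatio 0 = 0 := by
    rw [ellipticRatio, Kc_sub_Ec one_pos, zero_mul, mul_zero, zero_div]
  simpa only [hzero] using (continuousAt_ellipticRatio one_pos (by norm_num)).tendsto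

lemma tendsto_sinSqMean_one_one_sub_nhdsLT_one :
    Tendsto (fun m => sinSqMean 1 (1 - m)) (𝓝[<] 1) (𝓝 1) := by
  have hpos : ∀ᶠ m in 𝓝[<] (1:ℝ), 0 < 1 - m := by
    filter_upwards [self_mem_nhdsWithin] with m hm using sub_pos.2 hm
  have hcompl : Tendsto (fun m : ℝ => 1 - m) (𝓝[<] 1) (𝓝[>] 0) :=
    tendsto_nhdsWithin_iff.2
      ⟨(Continuous.tendsto' (by fun_prop) 1 0 (sub_self 1)).mono_left nhdsWithin_le_nhds, hpos⟩
  have hswap : Tendsto (fun m => sinSqMean (1 - m) 1) (𝓝[<] 1) (𝓝 0) := by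
    refine tendsto_sinSqMean_of_div_atTop hpos (Eventually.of_forall fun _ => one_pos) ?_
    simp only [one_div]
    exact hcompl.inv_tendsto_nhdsGT_zero
  have hcomplement : Tendsto (fun m => 1 - sinSqMean (1 - m) 1) (𝓝[<] 1) (𝓝 1) := by
    simpa only [sub_zero] using hswap.const_sub 1
  refine hcomplement.congr' ?_
  filter_upwards [hpos] with m hm using (sinSqMean_swap hm one_pos).symm

lemma tendsto_ellipticRatio_nhdsLT_one : Tendsto ellipticRatio (𝓝[<] 1) (𝓝 1) := by
  have hfactor : Tendsto (fun m : ℝ => 2 - 2 / (1 + m)) (𝓝[<] 1) (𝓝 1) := by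
    have hcont : ContinuousAt (fun m : ℝ => 2 - 2 / (1 + m)) 1 := by
      fun_prop (disch := norm_num)
    convert hcont.tendsto.mono_left nhdsWithin_le_nhds using 2
    norm_num
  have hprod := hfactor.mul tendsto_sinSqMean_one_one_sub_nhdsLT_one
  rw [mul_one] at hprod
  refine hprod.congr' ?_
  filter_upwards [Ioo_mem_nhdsLT zero_lt_one] with m hm
  exact (ellipticRatio_eq hm.2 (by linarith [hm.1])).symm

lemma bijOn_ellipticRatio_Iio : BijOn ellipticRatio (Iio (-1)) (Ioi 0) := by
  have hlt {m : ℝ} (hm : m < -1) : m < 1 := hm.trans (by norm_num)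
  have hcont : ContinuousOn ellipticRatio (Iio (-1)) := continuousOn_of_forall_continuousAt
    fun m hm => continuousAt_ellipticRatio (hlt hm) (by linarith [mem_Iio.1 hm])
  have hmono : StrictMonoOn ellipticRatio (Iio (-1)) := fun m hm n hn hmn =>
    ellipticRatio_lt_ellipticRatio hmn (hlt hn)
      (mul_pos_of_neg_of_neg (by linarith [mem_Iio.1 hm]) (by linarith [mem_Iio.1 hn])) (.inl hn)
  exact ⟨fun m hm => ellipticRatio_pos (hlt hm) (.inl hm), hmono.injOn,
    isPreconnected_Iio.intermediate_value_Ioi (le_principal_iff.2 (Iio_mem_atBot _))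
      (le_principal_iff.2 self_mem_nhdsWithin) hcont tendsto_ellipticRatio_atBot
      tendsto_ellipticRatio_nhdsLT_neg_one⟩

lemma bijOn_ellipticRatio_Ioo : BijOn ellipticRatio (Ioo 0 1) (Ioo 0 1) := by
  have hcont : ContinuousOn ellipticRatio (Ioo 0 1) := continuousOn_of_forall_continuousAt
    fun m hm => continuousAt_ellipticRatio hm.2 (by linarith [hm.1])
  have hmono : StrictMonoOn ellipticRatio (Ioo 0 1) := fun m hm n hn hmn =>
    ellipticRatio_lt_ellipticRatio hmn hn.2
      (mul_pos (by linarith [hm.1]) (by linarith [hn.1])) (.inr hn.1)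
  exact ⟨fun m hm => ⟨ellipticRatio_pos hm.2 (.inr hm.1), ellipticRatio_lt_one hm.1 hm.2⟩,
    hmono.injOn,
    isPreconnected_Ioo.intermediate_value_Ioo (le_principal_iff.2 (Ioo_mem_nhdsGT one_pos))
      (le_principal_iff.2 (Ioo_mem_nhdsLT one_pos)) hcont
      (tendsto_ellipticRatio_nhds_zero.mono_left nhdsWithin_le_nhds)
      tendsto_ellipticRatio_nhdsLT_one⟩

lemma existsUnique_of_bijOn_ellipticRatio {s t : Set ℝ} (h : BijOn ellipticRatio s t)
    (hs : ∀ m ∈ s, m < 1 ∧ 1 + m ≠ 0) {y : ℝ} (hy : y ∈ t) :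
    ∃! m, m ∈ s ∧ 2 * (Kc m - Ec m) = y * (1 + m) * Kc m := by
  obtain ⟨m, hm, rfl⟩ := h.surjOn hy
  refine ⟨m, ⟨hm, (ellipticRatio_eq_iff (hs m hm).1 (hs m hm).2).1 rfl⟩, fun n ⟨hn, heq⟩ => ?_⟩
  exact h.injOn hn hm ((ellipticRatio_eq_iff (hs n hn).1 (hs n hn).2).2 heq)

end elliptic

theorem stmt_14 :
    -- (i)
    (∀ lam : ℝ, 0 < lam →
      ∃! m : ℝ, m < -1 ∧ 2 * (Kc m - Ec m) = lam * (1 + m) * Kc m) ∧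
    -- (ii)
    (∀ lam : ℝ, lam ∈ Set.Ioo (0 : ℝ) 1 →
      ∃! m : ℝ, m ∈ Set.Ioo (0 : ℝ) 1 ∧ 2 * (Kc m - Ec m) = lam * (1 + m) * Kc m) ∧
    -- equivalently, m ↦ 2(K(m) − E(m))/((1 + m)K(m)) is a bijection
    Set.BijOn (fun m => 2 * (Kc m - Ec m) / ((1 + m) * Kc m))
      (Set.Iio (-1 : ℝ)) (Set.Ioi (0 : ℝ)) ∧
    Set.BijOn (fun m => 2 * (Kc m - Ec m) / ((1 + m) * Kc m))
      (Set.Ioo (0 : ℝ) 1) (Set.Ioo (0 : ℝ) 1) := by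
  refine ⟨fun lam hlam => ?_, fun lam hlam => ?_, bijOn_ellipticRatio_Iio, bijOn_ellipticRatio_Ioo⟩
  · refine existsUnique_of_bijOn_ellipticRatio bijOn_ellipticRatio_Iio (fun m hm => ?_) hlam
    have hm' : m < -1 := hm
    exact ⟨by linarith, by linarith⟩
  · exact existsUnique_of_bijOn_ellipticRatio bijOn_ellipticRatio_Ioo
      (fun m hm => ⟨hm.2, by linarith [hm.1]⟩) hlam
end

section
/- For every R > 0 one has ∫₀^{π/2} ( (R − 1)/((R + 1)R) − sin²θ ) · (1 + R² sin²θ)^{−1/2} dθ < 0. -/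
open Real

/-!
Put `D = √(1 + R²)`, `u = cos² θ + D² sin² θ = 1 + R² sin² θ` and `a = D² / (R + 1)`. The integrand
is `R⁻² (a - u) / √u`, which is convex in `u`, and `u` averages the endpoints `1` and `D²` with
weights `cos² θ` and `sin² θ` of equal mass `π / 4`. The integral is therefore at most
`π / 4 · R⁻² · ((a - 1) + (a - D²) / D) = π / 4 · R⁻² · (1 + D) (D / (R + 1) - 1)`, which is
negative because `D < R + 1`.
-/

theorem convexOn_inv_of_concaveOn_of_pos {𝕜 E : Type*} [Field 𝕜] [LinearOrder 𝕜]
    [IsStrictOrderedRing 𝕜] [AddCommMonoid E] [SMul 𝕜 E] {s : Set E} {f : E → 𝕜}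
    (hf : ConcaveOn 𝕜 s f) (hpos : ∀ x ∈ s, 0 < f x) :
    ConvexOn 𝕜 s fun x => (f x)⁻¹ := by
  refine ⟨hf.1, fun x hx y hy a b ha hb hab => ?_⟩
  have hmean : 0 < a • f x + b • f y :=
    convex_Ioi (0 : 𝕜) (hpos x hx) (hpos y hy) ha hb hab
  have hinv : ConvexOn 𝕜 (Set.Ioi (0 : 𝕜)) fun t => t⁻¹ := by
    simpa only [zpow_neg_one] using convexOn_zpow (𝕜 := 𝕜) (-1)
  calc (f (a • x + b • y))⁻¹
      ≤ (a • f x + b • f y)⁻¹ := inv_anti₀ hmean (hf.2 hx hy ha hb hab)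
    _ ≤ a • (f x)⁻¹ + b • (f y)⁻¹ := hinv.2 (hpos x hx) (hpos y hy) ha hb hab

theorem convexOn_sub_div_sqrt {a : ℝ} (ha : 0 ≤ a) :
    ConvexOn ℝ (Set.Ioi 0) fun u => (a - u) / √u := by
  have hsqrt : ConcaveOn ℝ (Set.Ioi 0) fun u : ℝ => √u :=
    strictConcaveOn_sqrt.concaveOn.subset Set.Ioi_subset_Ici_self (convex_Ioi 0)
  have hinv : ConvexOn ℝ (Set.Ioi 0) fun u : ℝ => (√u)⁻¹ :=
    convexOn_inv_of_concaveOn_of_pos hsqrt fun _ => sqrt_pos.2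
  refine ((hinv.smul ha).sub hsqrt).congr fun u _ => ?_
  simp only [Pi.sub_apply, smul_eq_mul, sub_div, div_sqrt, div_eq_mul_inv a]

theorem integral_comp_cos_sq_smul_add_sin_sq_smul_le {E : Type*} [AddCommMonoid E] [SMul ℝ E]
    {s : Set E} {f : E → ℝ} (hf : ConvexOn ℝ s f) {x y : E} (hx : x ∈ s) (hy : y ∈ s)
    (hint : IntervalIntegrable (fun θ => f (cos θ ^ 2 • x + sin θ ^ 2 • y))
      MeasureTheory.volume 0 (π / 2)) :
    ∫ θ in (0 : ℝ)..(π / 2), f (cos θ ^ 2 • x + sin θ ^ 2 • y) ≤ π / 4 * (f x + f y) := by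
  have hcos : IntervalIntegrable (fun θ => cos θ ^ 2 * f x) MeasureTheory.volume 0 (π / 2) :=
    Continuous.intervalIntegrable (by fun_prop) _ _
  have hsin : IntervalIntegrable (fun θ => sin θ ^ 2 * f y) MeasureTheory.volume 0 (π / 2) :=
    Continuous.intervalIntegrable (by fun_prop) _ _
  calc ∫ θ in (0 : ℝ)..(π / 2), f (cos θ ^ 2 • x + sin θ ^ 2 • y)
      ≤ ∫ θ in (0 : ℝ)..(π / 2), (cos θ ^ 2 * f x + sin θ ^ 2 * f y) :=
        intervalIntegral.integral_mono (by positivity) hint (hcos.add hsin) fun θ =>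
          hf.2 hx hy (sq_nonneg _) (sq_nonneg _) (cos_sq_add_sin_sq θ)
    _ = π / 4 * (f x + f y) := by
        rw [intervalIntegral.integral_add hcos hsin, intervalIntegral.integral_mul_const,
          intervalIntegral.integral_mul_const, integral_cos_sq, integral_sin_sq, cos_pi_div_two,
          sin_zero]
        ring

theorem integral_sub_div_sqrt_cos_sq_add_sin_sq_le {a p q : ℝ} (ha : 0 ≤ a) (hp : 0 < p)
    (hq : 0 < q) :
    ∫ θ in (0 : ℝ)..(π / 2),
        (a - (cos θ ^ 2 * p ^ 2 + sin θ ^ 2 * q ^ 2)) / √(cos θ ^ 2 * p ^ 2 + sin θ ^ 2 * q ^ 2)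
      ≤ π / 4 * ((p + q) * (a / (p * q) - 1)) := by
  have hconv := convexOn_sub_div_sqrt ha
  have hp2 : p ^ 2 ∈ Set.Ioi (0 : ℝ) := pow_pos hp 2
  have hq2 : q ^ 2 ∈ Set.Ioi (0 : ℝ) := pow_pos hq 2
  have hcont : Continuous fun θ : ℝ =>
      (a - (cos θ ^ 2 • p ^ 2 + sin θ ^ 2 • q ^ 2)) / √(cos θ ^ 2 • p ^ 2 + sin θ ^ 2 • q ^ 2) :=
    (hconv.continuousOn isOpen_Ioi).comp_continuous (by fun_prop) fun θ =>
      convex_Ioi (0 : ℝ) hp2 hq2 (sq_nonneg _) (sq_nonneg _) (cos_sq_add_sin_sq θ)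
  refine (integral_comp_cos_sq_smul_add_sin_sq_smul_le hconv hp2 hq2
    (hcont.intervalIntegrable _ _)).trans_eq ?_
  rw [sqrt_sq hp.le, sqrt_sq hq.le]
  field_simp
  ring

theorem stmt_18 (R : ℝ) (hR : 0 < R) :
    ∫ θ in (0:ℝ)..(π / 2),
        ((R - 1) / ((R + 1) * R) - Real.sin θ ^ 2) / Real.sqrt (1 + R ^ 2 * Real.sin θ ^ 2)
      < 0 := by
  set D := √(1 + R ^ 2)
  have hD : 0 < D := by positivity
  have hD2 : D ^ 2 = 1 + R ^ 2 := sq_sqrt (by positivity)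
  have hDR : D < R + 1 := (sqrt_lt' (by positivity)).2 (by nlinarith)
  have hbound := integral_sub_div_sqrt_cos_sq_add_sin_sq_le
    (a := D ^ 2 / (R + 1)) (by positivity) one_pos hD
  have hu (θ : ℝ) : cos θ ^ 2 * 1 ^ 2 + sin θ ^ 2 * D ^ 2 = 1 + R ^ 2 * sin θ ^ 2 := by
    linear_combination cos_sq_add_sin_sq θ + sin θ ^ 2 * hD2
  have hscale (θ : ℝ) : (R - 1) / ((R + 1) * R) - sin θ ^ 2
      = (R ^ 2)⁻¹ * (D ^ 2 / (R + 1) - (1 + R ^ 2 * sin θ ^ 2)) := by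
    rw [hD2]
    field_simp
    ring
  have hneg : (1 + D) * (D ^ 2 / (R + 1) / (1 * D) - 1) < 0 := by
    refine mul_neg_of_pos_of_neg (by positivity) (sub_neg.2 ?_)
    rwa [one_mul, div_right_comm, sq, mul_self_div_self, div_lt_one (by positivity)]
  simp only [hu] at hbound
  simp only [hscale, mul_div_assoc, intervalIntegral.integral_const_mul]
  exact mul_neg_of_pos_of_neg (by positivity)
    (hbound.trans_lt (mul_neg_of_pos_of_neg (by positivity) hneg))
end
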